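/- Let $X \cong \mathrm{Aut}(\mathrm{PSL}_3(2^a))$ with $a \ge 2$, let $S \in \mathrm{Syl}_2(X)$, and let $T = S \cap F^*(X)$ (so $T$ is a Sylow 2-subgroup of $\mathrm{PSL}_3(2^a)$). If $U \le S$ with $U \cong T$, then $U = T$. -/

import Mathlib

def fittingSubgroup (G : Type*) [Group G] : Subgroup G :=
  sSup {N : Subgroup G | N.Normal ∧ Group.IsNilpotent N}

def IsSubnormal {G : Type*} [Group G] (K : Subgroup G) : Prop :=
  Relation.ReflTransGen
    (fun A B : Subgroup G => A ≤ B ∧ ∀ b ∈ B, ∀ a ∈ A, b * a * b⁻¹ ∈ A) K ⊤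

def IsQuasisimple {G : Type*} [Group G] (L : Subgroup G) : Prop :=
  commutator ↥L = ⊤ ∧ IsSimpleGroup (↥L ⧸ Subgroup.center ↥L)

def IsComponent {G : Type*} [Group G] (L : Subgroup G) : Prop :=
  IsSubnormal L ∧ IsQuasisimple L

def layerSub (G : Type*) [Group G] : Subgroup G :=
  sSup {L : Subgroup G | IsComponent L}

/-- `F^*(G)`, the generalized Fitting subgroup. -/
def genFitting (G : Type*) [Group G] : Subgroup G :=
  fittingSubgroup G ⊔ layerSub G

/-- `PSL₃(2^a)`. -/
noncomputable abbrev PSL3 (a : ℕ) :=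
  Matrix.ProjectiveSpecialLinearGroup (Fin 3) (GaloisField 2 a)


namespace PSLAux
open Matrix Matrix.SpecialLinearGroup
open scoped commutatorElement MatrixGroups LinearAlgebra.Projectivization

section simple
variable {F : Type*} [Field F]

set_option maxHeartbeats 2000000 in
lemma diag2n_decompose {i j : Fin 3} (hij : i ≠ j) (a : F) (ha : a ≠ 0) :
    diag2n hij a ha = SpecialLinearGroup.transvection hij a *
      SpecialLinearGroup.transvection hij.symm (- a⁻¹) *
      SpecialLinearGroup.transvection hij a *
      SpecialLinearGroup.transvection hij (-1) *
      SpecialLinearGroup.transvection hij.symm 1 *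
      SpecialLinearGroup.transvection hij (-1) := by
  ext k l
  fin_cases i <;> fin_cases j <;> first | exact absurd rfl hij | skip
  all_goals
    fin_cases k <;> fin_cases l <;>
    simp [diag2n_coe, transvection_coe, mul_add, add_mul, mul_inv_cancel₀ ha, inv_mul_cancel₀ ha]

lemma closed_eq_top (H : Subgroup SL(3, F))
    (h : ∀ (i j : Fin 3) (hij : i ≠ j) (a : F), SpecialLinearGroup.transvection hij a ∈ H) :
    H = ⊤ := by
  rw [eq_top_iff]
  intro M _
  refine diagonal_transvection_induction' (fun M => M ∈ H) M ?_ h (fun _ _ => mul_mem)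
  intro i j hij c hc
  rw [diag2n_decompose]
  exact mul_mem (mul_mem (mul_mem (mul_mem (mul_mem (h _ _ _ _) (h _ _ _ _)) (h _ _ _ _))
    (h _ _ _ _)) (h _ _ _ _)) (h _ _ _ _)

lemma transvection_comm {i j k : Fin 3} (hij : i ≠ j) (hik : i ≠ k) (hkj : k ≠ j) (c : F) :
    SpecialLinearGroup.transvection hij c =
    ⁅SpecialLinearGroup.transvection hik c, SpecialLinearGroup.transvection hkj 1⁆ := by
  rw [commutatorElement_def, SpecialLinearGroup.transvection_inv,
    SpecialLinearGroup.transvection_inv]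
  apply Subtype.ext
  simp [transvection_coe, mul_add, add_mul, Matrix.single_mul_single_of_ne, hij.symm, hik.symm, hkj.symm]
  have hn : ∀ (a b : Fin 3) (x : F), single a b (-x) = -single a b x := by
    intro a b x
    ext u v
    simp only [single_apply, Matrix.neg_apply]
    split_ifs <;> simp
  rw [hn, hn, hn]
  abel

lemma SL3_perfect : commutator SL(3, F) = ⊤ := by
  apply closed_eq_top
  intro i j hij a
  obtain ⟨k, hik, hkj⟩ : ∃ k : Fin 3, i ≠ k ∧ k ≠ j := by
    revert i j; decide
  rw [transvection_comm hij hik hkj]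
  exact Subgroup.commutator_mem_commutator (Subgroup.mem_top _) (Subgroup.mem_top _)

lemma PSL3_perfect : commutator PSL(3, F) = ⊤ := by
  have : Group.IsPerfect SL(3, F) := ⟨SL3_perfect⟩
  have : Group.IsPerfect PSL(3, F) := inferInstance
  exact this.commutator_eq_top

lemma iSup_lineStab3 :
    (⨆ p : ℙ F (Fin 3 → F), lineStab p.submodule) = (⊤ : Subgroup SL(3, F)) := by
  apply closed_eq_top
  intro i j hij a
  have h1 := SL2Gen.transvection_mem_lineStab (F := F) hij a
  rw [← Projectivization.submodule_mk (K := F) _ (Pi.single_ne_zero_iff.2 one_ne_zero)] at h1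
  exact (le_iSup (fun p : ℙ F (Fin 3 → F) => lineStab p.submodule) _) h1

noncomputable def iwasawa3 : MulAction.IwasawaStructure PSL(3, F) (ℙ F (Fin 3 → F)) where
  T := PSL.iwasawaT
  is_comm p := by
    have hSL : IsMulCommutative (lineStab (F := F) (ι := Fin 3) p.submodule) := by
      rw [← Projectivization.mk_rep p, Projectivization.submodule_mk]
      exact lineStab_isMulCommutative_of_span p.rep p.rep_nonzero
    exact Subgroup.map_isMulCommutative _ _
  is_conj g p := by
    obtain ⟨g_SL, rfl⟩ := QuotientGroup.mk_surjective g
    rw [Matrix.ProjectiveSpecialLinearGroup.smul_proj_mk]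
    change Subgroup.map _ _ = _
    rw [PSL.smul_submodule, Matrix.SpecialLinearGroup.lineStab_smul,
      PSL.iwasawaT_map_conj]
  is_generator := by
    have step1 : iSup (PSL.iwasawaT (F := F) (ι := Fin 3)) =
      Subgroup.map (QuotientGroup.mk' (Subgroup.center (Matrix.SpecialLinearGroup (Fin 3) F)))
        (⨆ p : ℙ F (Fin 3 → F),
          Matrix.SpecialLinearGroup.lineStab (F := F) (ι := Fin 3) p.submodule) := by
      rw [Subgroup.map_iSup]
    rw [step1, iSup_lineStab3]
    exact Subgroup.map_top_of_surjective _ (QuotientGroup.mk'_surjective _)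

lemma PSL3_simple : IsSimpleGroup PSL(3, F) :=
  MulAction.IwasawaStructure.isSimpleGroup PSL3_perfect iwasawa3 inferInstance

end simple
end PSLAux

namespace PSLAux

lemma quot_bot_equiv {G : Type*} [Group G] (N : Subgroup G) [N.Normal] (h : N = ⊥) :
    Nonempty (G ⧸ N ≃* G) := by
  subst h
  exact ⟨QuotientGroup.quotientBot⟩

section gfit
variable {X : Type*} [Group X] (L : Subgroup X)

lemma eq_bot_or_le_of_subnormal [hL : L.Normal] [IsSimpleGroup L]
    (hC : ∀ x : X, (∀ l ∈ L, x * l = l * x) → x = 1)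
    (K : Subgroup X) (hK : _root_.IsSubnormal K) : K = ⊥ ∨ L ≤ K := by
  unfold _root_.IsSubnormal at hK
  induction hK using Relation.ReflTransGen.head_induction_on with
  | refl => right; exact le_top
  | @head A B hAB _ ih =>
    obtain ⟨hle, hn⟩ := hAB
    rcases ih with ih | ih
    · left; rw [eq_bot_iff, ← ih]; exact hle
    · have hnorm : (A.subgroupOf L).Normal := by
        constructor
        intro a ha g
        rw [Subgroup.mem_subgroupOf] at ha ⊢
        exact hn g (ih g.2) a ha
      rcases hnorm.eq_bot_or_eq_top with h | h
      · left
        rw [eq_bot_iff]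
        intro x hx
        rw [Subgroup.mem_bot]
        apply hC
        intro l hl
        have h1 : l * x⁻¹ * l⁻¹ ∈ A := hn l (ih hl) _ (inv_mem hx)
        have h2 : x * l * x⁻¹ ∈ L := hL.conj_mem l hl x
        have h3 : x * l * x⁻¹ * l⁻¹ ∈ L := mul_mem h2 (inv_mem hl)
        have h4 : x * l * x⁻¹ * l⁻¹ ∈ A := by
          have := mul_mem hx h1
          simpa [mul_assoc] using this
        have h5 : (⟨_, h3⟩ : L) ∈ A.subgroupOf L := by
          rw [Subgroup.mem_subgroupOf]; exact h4
        rw [h, Subgroup.mem_bot] at h5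
        have h6 : x * l * x⁻¹ * l⁻¹ = 1 := congrArg Subtype.val h5
        have h7 := mul_inv_eq_one.mp h6
        exact mul_inv_eq_iff_eq_mul.mp h7
      · right
        rwa [Subgroup.subgroupOf_eq_top] at h

lemma genFitting_eq [hL : L.Normal] [hs : IsSimpleGroup L] (hperf : commutator L = ⊤)
    (hC : ∀ x : X, (∀ l ∈ L, x * l = l * x) → x = 1) : genFitting X = L := by
  have hcenter : Subgroup.center L = ⊥ := by
    rcases (inferInstance : (Subgroup.center L).Normal).eq_bot_or_eq_top with h | h
    · exact h
    · exfalso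
      have : commutator L = ⊥ := by
        rw [eq_bot_iff, commutator_def, Subgroup.commutator_le]
        intro a _ b _
        rw [Subgroup.mem_bot, commutatorElement_eq_one_iff_mul_comm]
        have ha : a ∈ Subgroup.center L := by rw [h]; trivial
        exact (Subgroup.mem_center_iff.mp ha b).symm
      rw [hperf] at this
      exact bot_ne_top this.symm
  have hsub : ∀ K : Subgroup X, K.Normal → _root_.IsSubnormal K := by
    intro K hK
    exact Relation.ReflTransGen.single ⟨le_top, fun b _ a ha => hK.conj_mem a ha b⟩
  apply le_antisymm
  · apply sup_le
    · apply sSup_le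
      rintro N ⟨hN, hnil⟩
      rcases eq_bot_or_le_of_subnormal L hC N (hsub N hN) with h | h
      · rw [h]; exact bot_le
      · exfalso
        have : Group.IsNilpotent L := by
          have h1 : Group.IsNilpotent (L.subgroupOf N) := inferInstance
          exact (Group.isNilpotent_congr (Subgroup.subgroupOfEquivOfLe h)).mp h1
        have hsolv : Group.IsSolvable L := inferInstance
        have hcomm := IsSimpleGroup.comm_iff_isSolvable.mpr hsolv
        have : commutator L = ⊥ := by
          rw [eq_bot_iff, commutator_def, Subgroup.commutator_le]
          intro a _ b _
          rw [Subgroup.mem_bot, commutatorElement_eq_one_iff_mul_comm]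
          exact hcomm a b
        rw [hperf] at this
        exact bot_ne_top this.symm
    · apply sSup_le
      rintro K ⟨hK, hperfK, hsK⟩
      rcases eq_bot_or_le_of_subnormal L hC K hK with h | h
      · rw [h]; exact bot_le
      · have hZ : Subgroup.center K = ⊥ := by
          rw [eq_bot_iff]
          intro x hx
          rw [Subgroup.mem_bot]
          apply Subtype.ext
          apply hC
          intro l hl
          have := Subgroup.mem_center_iff.mp hx ⟨l, h hl⟩
          exact (congrArg Subtype.val this).symm
        have hsK' : IsSimpleGroup K := by
          obtain ⟨e⟩ := quot_bot_equiv _ hZ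
          exact e.symm.isSimpleGroup
        have hn : (L.subgroupOf K).Normal := inferInstance
        rcases hn.eq_bot_or_eq_top with h' | h'
        · exfalso
          rw [Subgroup.subgroupOf_eq_bot, disjoint_iff, inf_eq_left.mpr h] at h'
          have : Nontrivial L := inferInstance
          exact (Subgroup.nontrivial_iff_ne_bot L).mp this h'
        · rwa [Subgroup.subgroupOf_eq_top] at h'
  · apply le_sup_of_le_right
    apply le_sSup
    refine ⟨hsub L hL, hperf, ?_⟩
    obtain ⟨e⟩ := quot_bot_equiv _ hcenter
    exact e.isSimpleGroup

end gfit

section aut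
variable {G : Type*} [Group G]

lemma center_bot_of_simple [IsSimpleGroup G] (hp : commutator G = ⊤) : Subgroup.center G = ⊥ := by
  rcases (inferInstance : (Subgroup.center G).Normal).eq_bot_or_eq_top with h | h
  · exact h
  · exfalso
    have : commutator G = ⊥ := by
      rw [eq_bot_iff, commutator_def, Subgroup.commutator_le]
      intro a _ b _
      rw [Subgroup.mem_bot, commutatorElement_eq_one_iff_mul_comm]
      have ha : a ∈ Subgroup.center G := by rw [h]; trivial
      exact (Subgroup.mem_center_iff.mp ha b).symm
    rw [hp] at this
    exact bot_ne_top this.symm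

lemma conj_inj (hZ : Subgroup.center G = ⊥) : Function.Injective (MulAut.conj : G →* MulAut G) := by
  rw [injective_iff_map_eq_one]
  intro g hg
  have : g ∈ Subgroup.center G := by
    rw [Subgroup.mem_center_iff]
    intro h
    have := congrArg (fun f : MulAut G => f h) hg
    simp only [MulAut.conj_apply, MulAut.one_apply] at this
    exact (mul_inv_eq_iff_eq_mul.mp this).symm
  rwa [hZ, Subgroup.mem_bot] at this

lemma aut_conj (φ : MulAut G) (g : G) : φ * MulAut.conj g * φ⁻¹ = MulAut.conj (φ g) := by
  ext x
  simp [MulAut.mul_apply]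

lemma fix_of_commute (hZ : Subgroup.center G = ⊥) (φ : MulAut G) (g : G)
    (h : φ * MulAut.conj g = MulAut.conj g * φ) : φ g = g := by
  apply conj_inj hZ
  rw [← aut_conj, h, mul_inv_cancel_right]

lemma genFitting_aut [IsSimpleGroup G] (hp : commutator G = ⊤) :
    genFitting (MulAut G) = (MulAut.conj : G →* MulAut G).range := by
  have hZ := center_bot_of_simple hp
  have e : G ≃* (MulAut.conj : G →* MulAut G).range := MonoidHom.ofInjective (conj_inj hZ)
  have : IsSimpleGroup (MulAut.conj : G →* MulAut G).range := e.symm.isSimpleGroup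
  have : ((MulAut.conj : G →* MulAut G).range).Normal := by
    constructor
    rintro _ ⟨g, rfl⟩ φ
    exact ⟨φ g, (aut_conj φ g).symm⟩
  apply genFitting_eq
  · have h1 : Group.IsPerfect G := ⟨hp⟩
    have h2 : Group.IsPerfect (MulAut.conj : G →* MulAut G).range :=
      Group.IsPerfect.ofSurjective (f := e.toMonoidHom) e.surjective
    exact h2.commutator_eq_top
  · intro φ h
    ext g
    exact fix_of_commute hZ φ g (h _ ⟨g, rfl⟩)
end aut
end PSLAux

namespace PSLAux
open Matrix Matrix.SpecialLinearGroup
open scoped MatrixGroups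

section mats
variable {F : Type*} [Field F]

/-- the underlying matrix, as a monoid hom -/
def cm : SL(3, F) →* Matrix (Fin 3) (Fin 3) F := SpecialLinearGroup.coeMonoidHom

lemma cm_inj {A B : SL(3, F)} (h : cm A = cm B) : A = B :=
  SpecialLinearGroup.coeMonoidHom_injective h

lemma cm_det (A : SL(3, F)) : (cm A).det = 1 := A.2

lemma cm_inv_mul (A : SL(3, F)) : cm A⁻¹ * cm A = 1 := by
  rw [← map_mul]; simp

lemma cm_mul_inv (A : SL(3, F)) : cm A * cm A⁻¹ = 1 := by
  rw [← map_mul]; simp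

/-- build an element of SL3 -/
def mkSL (A : Matrix (Fin 3) (Fin 3) F) (h : A.det = 1) : SL(3, F) := ⟨A, h⟩

lemma cm_mkSL (A : Matrix (Fin 3) (Fin 3) F) (h : A.det = 1) : cm (mkSL A h) = A := rfl

/-- upper unitriangular matrices -/
def um (x y z : F) : SL(3, F) := mkSL !![1, x, z; 0, 1, y; 0, 0, 1] (by
  simp [Matrix.det_fin_three])

lemma cm_um (x y z : F) : cm (um x y z) = !![1, x, z; 0, 1, y; 0, 0, 1] := rfl

lemma um_mul (x y z x' y' z' : F) :
    um x y z * um x' y' z' = um (x + x') (y + y') (z + z' + x * y') := by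
  apply cm_inj
  rw [map_mul, cm_um, cm_um, cm_um]
  ext i j
  fin_cases i <;> fin_cases j <;> simp [Matrix.mul_apply, Fin.sum_univ_three] <;> ring

lemma um_zero : um (0 : F) 0 0 = 1 := by
  apply cm_inj
  rw [cm_um, map_one]
  ext i j
  fin_cases i <;> fin_cases j <;> simp

/-- the projection to `PSL` -/
def pr : SL(3, F) →* PSL(3, F) := QuotientGroup.mk' _

lemma pr_surj : Function.Surjective (pr : SL(3, F) →* PSL(3, F)) := QuotientGroup.mk'_surjective _

/-- image in `PSL` -/
def uG (x y z : F) : PSL(3, F) := pr (um x y z)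

lemma uG_mul (x y z x' y' z' : F) :
    uG x y z * uG x' y' z' = uG (x + x') (y + y') (z + z' + x * y') := by
  rw [uG, uG, uG, ← um_mul, map_mul]

lemma uG_zero : uG (0 : F) 0 0 = 1 := by rw [uG, um_zero, map_one]

lemma pr_eq (A B : SL(3, F)) (h : pr A = pr B) : ∃ r : F, r ^ 3 = 1 ∧ cm B = r • cm A := by
  have h' : (QuotientGroup.mk A : PSL(3, F)) = QuotientGroup.mk B := h
  rw [QuotientGroup.eq, mem_center_iff] at h'
  obtain ⟨r, h1, h2⟩ := h'
  refine ⟨r, by simpa using h1, ?_⟩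
  have h3 : cm (A⁻¹ * B) = scalar (Fin 3) r := h2.symm
  have : B = A * (A⁻¹ * B) := by group
  rw [this, map_mul, h3]
  rw [Matrix.scalar_apply, ← Matrix.smul_one_eq_diagonal]
  simp

lemma pr_eq_of (A B : SL(3, F)) (r : F) (hr : r ^ 3 = 1) (h : cm B = r • cm A) : pr A = pr B := by
  have : (QuotientGroup.mk A : PSL(3, F)) = QuotientGroup.mk B := by
    rw [QuotientGroup.eq, mem_center_iff]
    refine ⟨r, by simpa using hr, ?_⟩
    change scalar (Fin 3) r = cm (A⁻¹ * B)
    rw [map_mul, h, Matrix.mul_smul, cm_inv_mul, Matrix.scalar_apply, Matrix.smul_one_eq_diagonal]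
  exact this

lemma uG_inj {x y z x' y' z' : F} (h : uG x y z = uG x' y' z') : x = x' ∧ y = y' ∧ z = z' := by
  obtain ⟨r, -, h2⟩ := pr_eq _ _ h
  rw [cm_um, cm_um] at h2
  have e00 := congrFun (congrFun h2 0) 0
  have e01 := congrFun (congrFun h2 0) 1
  have e02 := congrFun (congrFun h2 0) 2
  have e12 := congrFun (congrFun h2 1) 2
  simp at e00 e01 e02 e12
  subst e00
  simp_all

/-- strictly upper triangular matrices -/
def nm (x y z : F) : Matrix (Fin 3) (Fin 3) F := !![0, x, z; 0, 0, y; 0, 0, 0]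

lemma nm_add (x y z x' y' z' : F) : nm (x + x') (y + y') (z + z') = nm x y z + nm x' y' z' := by
  ext i j
  fin_cases i <;> fin_cases j <;> simp [nm]

lemma nm_smul (c x y z : F) : nm (c * x) (c * y) (c * z) = c • nm x y z := by
  ext i j
  fin_cases i <;> fin_cases j <;> simp [nm]

lemma cm_um' (x y z : F) : cm (um x y z) = 1 + nm x y z := by
  rw [cm_um]; ext i j
  fin_cases i <;> fin_cases j <;> simp [nm]

variable [CharP F 2]

lemma two_eq : (2 : F) = 0 := CharTwo.two_eq_zero

lemma lift_eq (g : SL(3, F)) {x y z x' y' z' : F}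
    (h : pr g * uG x y z * (pr g)⁻¹ = uG x' y' z') :
    g * um x y z * g⁻¹ = um x' y' z' := by
  have h' : pr (g * um x y z * g⁻¹) = pr (um x' y' z') := by
    rw [map_mul, map_mul, map_inv]; exact h
  obtain ⟨r, -, h2⟩ := pr_eq _ _ h'
  have ht := congrArg Matrix.trace h2
  have e1 : Matrix.trace (cm (g * um x y z * g⁻¹)) = 3 := by
    rw [map_mul, map_mul, Matrix.trace_mul_comm, ← mul_assoc, cm_inv_mul, one_mul, cm_um,
      Matrix.trace_fin_three]
    simp; norm_num
  have e2 : Matrix.trace (cm (um x' y' z')) = 3 := by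
    rw [cm_um, Matrix.trace_fin_three]
    simp; norm_num
  rw [Matrix.trace_smul, e1, e2] at ht
  have h3 : (3 : F) = 1 := by
    have := two_eq (F := F)
    linear_combination this
  rw [h3] at ht
  simp at ht
  rw [← ht, one_smul] at h2
  exact (cm_inj h2).symm

lemma lift_eq' (g : SL(3, F)) {x y z x' y' z' : F}
    (h : pr g * uG x y z = uG x' y' z' * pr g) :
    cm g * cm (um x y z) = cm (um x' y' z') * cm g := by
  have := lift_eq g (x := x) (y := y) (z := z) (x' := x') (y' := y') (z' := z') (by rw [h]; group)
  rw [← map_mul, ← map_mul, ← this]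
  simp

/-- centralizer of `E1` -/
lemma cent_E1 (k : PSL(3, F)) (h : ∀ y z : F, k * uG 0 y z = uG 0 y z * k) :
    ∃ y z, k = uG 0 y z := by
  obtain ⟨g, rfl⟩ := pr_surj k
  have h1 := lift_eq' g (h 1 0)
  have h2 := lift_eq' g (h 0 1)
  have hd := cm_det g
  generalize hm : cm g = m at h1 h2 hd
  rw [cm_um] at h1 h2
  have a := fun i j => congrFun (congrFun h1 i) j
  have b := fun i j => congrFun (congrFun h2 i) j
  simp only [Matrix.mul_apply, Fin.sum_univ_three] at a b
  have a12 := a 1 2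
  have a10 := a 1 0
  have a11 := a 1 1
  have a02 := a 0 2
  have b02 := b 0 2
  have b12 := b 1 2
  have b00 := b 0 0
  have b01 := b 0 1
  simp at a10 a11 a12 a02 b00 b01 b02 b12
  have c11 : m 1 1 = m 2 2 := by linear_combination a12
  have c00 : m 0 0 = m 2 2 := by linear_combination b02
  rw [Matrix.det_fin_three] at hd
  have hr : m 2 2 ^ 3 = 1 := by
    simp_all
    linear_combination hd
  have hne : m 2 2 ≠ 0 := by rintro h0; rw [h0] at hr; simp at hr
  refine ⟨m 1 2 / m 2 2, m 0 2 / m 2 2, ?_⟩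
  symm
  apply pr_eq_of _ _ (m 2 2) hr
  rw [hm, cm_um]
  ext i j
  fin_cases i <;> fin_cases j <;> simp [hne] <;> simp_all <;> field_simp

lemma cent_E2 (k : PSL(3, F)) (h : ∀ x z : F, k * uG x 0 z = uG x 0 z * k) :
    ∃ x z, k = uG x 0 z := by
  obtain ⟨g, rfl⟩ := pr_surj k
  have h1 := lift_eq' g (h 1 0)
  have h2 := lift_eq' g (h 0 1)
  have hd := cm_det g
  generalize hm : cm g = m at h1 h2 hd
  rw [cm_um] at h1 h2
  have a := fun i j => congrFun (congrFun h1 i) j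
  have b := fun i j => congrFun (congrFun h2 i) j
  simp only [Matrix.mul_apply, Fin.sum_univ_three] at a b
  have a01 := a 0 1
  have a00 := a 0 0
  have a02 := a 0 2
  have a11 := a 1 1
  have b02 := b 0 2
  have b12 := b 1 2
  have b00 := b 0 0
  have b01 := b 0 1
  have b22 := b 2 2
  simp at a00 a01 a02 a11 b00 b01 b02 b12 b22
  have c11 : m 1 1 = m 2 2 := by linear_combination b02 - a01
  have c00 : m 0 0 = m 2 2 := by linear_combination b02
  rw [Matrix.det_fin_three] at hd
  have hr : m 2 2 ^ 3 = 1 := by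
    simp_all
    linear_combination hd
  have hne : m 2 2 ≠ 0 := by rintro h0; rw [h0] at hr; simp at hr
  refine ⟨m 0 1 / m 2 2, m 0 2 / m 2 2, ?_⟩
  symm
  apply pr_eq_of _ _ (m 2 2) hr
  rw [hm, cm_um]
  ext i j
  fin_cases i <;> fin_cases j <;> simp [hne] <;> simp_all <;> field_simp

/-- conjugation acts linearly -/
lemma conj_lin (k : PSL(3, F)) : ∃ A : Fin 3 → Fin 3 → F → F → F → F,
    (∀ i j x y z x' y' z', A i j (x + x') (y + y') (z + z') = A i j x y z + A i j x' y' z') ∧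
    (∀ i j c x y z, A i j (c * x) (c * y) (c * z) = c * A i j x y z) ∧
    (∀ x y z x' y' z', k * uG x y z * k⁻¹ = uG x' y' z' →
      x' = A 0 1 x y z ∧ y' = A 1 2 x y z ∧ z' = A 0 2 x y z) := by
  obtain ⟨g, rfl⟩ := pr_surj k
  refine ⟨fun i j x y z => (cm g * nm x y z * cm g⁻¹) i j, ?_, ?_, ?_⟩
  · intro i j x y z x' y' z'
    simp only [nm_add, mul_add, add_mul, Matrix.add_apply]
  · intro i j c x y z
    simp only [nm_smul, Matrix.mul_smul, Matrix.smul_mul, Matrix.smul_apply, smul_eq_mul]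
  · intro x y z x' y' z' h
    have h1 := congrArg cm (lift_eq g h)
    rw [map_mul, map_mul, cm_um', cm_um', mul_add, mul_one, add_mul, cm_mul_inv] at h1
    have h1 := (add_left_cancel h1).symm
    refine ⟨?_, ?_, ?_⟩
    · simp only [← h1]; simp [nm]
    · simp only [← h1]; simp [nm]
    · simp only [← h1]; simp [nm]

end mats
end PSLAux

namespace PSLAux
open Matrix Matrix.SpecialLinearGroup
open scoped MatrixGroups

section semilin
variable {F : Type*} [Field F]

/-- being given by an `F`-linear map -/
def Lin (T : F × F → F × F) : Prop := ∃ L : F × F →ₗ[F] F × F, ∀ v, T v = L v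

lemma semilin (f f' : F × F →+ F × F) (h1 : ∀ v, f (f' v) = v) (h2 : ∀ v, f' (f v) = v)
    (a12 : ∀ c, Lin (fun v => f ((f' v).1 + c * (f' v).2, (f' v).2)))
    (a21 : ∀ c, Lin (fun v => f ((f' v).1, (f' v).2 + c * (f' v).1)))
    (b12 : ∀ c, Lin (fun v => f' ((f v).1 + c * (f v).2, (f v).2)))
    (b21 : ∀ c, Lin (fun v => f' ((f v).1, (f v).2 + c * (f v).1))) :
    ∃ σ : F →+* F, ∀ c v, f (c • v) = σ c • f v := by
  have n12 : ∀ c, Lin (fun v => f (c * (f' v).2, 0)) := by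
    intro c
    obtain ⟨L, hL⟩ := a12 c
    refine ⟨L - LinearMap.id, fun v => ?_⟩
    rw [LinearMap.sub_apply, ← hL]
    simp only [LinearMap.id_apply]
    rw [show ∀ u : F × F, u - v = u - f (f' v) from fun u => by rw [h1], ← map_sub]; congr 1; ext <;> simp
  have n21 : ∀ c, Lin (fun v => f (0, c * (f' v).1)) := by
    intro c
    obtain ⟨L, hL⟩ := a21 c
    refine ⟨L - LinearMap.id, fun v => ?_⟩
    rw [LinearMap.sub_apply, ← hL]
    simp only [LinearMap.id_apply]
    rw [show ∀ u : F × F, u - v = u - f (f' v) from fun u => by rw [h1], ← map_sub]; congr 1; ext <;> simp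
  have m12 : ∀ c, Lin (fun v => f' (c * (f v).2, 0)) := by
    intro c
    obtain ⟨L, hL⟩ := b12 c
    refine ⟨L - LinearMap.id, fun v => ?_⟩
    rw [LinearMap.sub_apply, ← hL]
    simp only [LinearMap.id_apply]
    rw [show ∀ u : F × F, u - v = u - f' (f v) from fun u => by rw [h2], ← map_sub]; congr 1; ext <;> simp
  have m21 : ∀ c, Lin (fun v => f' (0, c * (f v).1)) := by
    intro c
    obtain ⟨L, hL⟩ := b21 c
    refine ⟨L - LinearMap.id, fun v => ?_⟩
    rw [LinearMap.sub_apply, ← hL]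
    simp only [LinearMap.id_apply]
    rw [show ∀ u : F × F, u - v = u - f' (f v) from fun u => by rw [h2], ← map_sub]; congr 1; ext <;> simp
  have key : ∀ c : F, ∃ s : F, ∀ v, f (c • v) = s • f v := by
    intro c
    have hA : Lin (fun v => f (c • f' v)) := by
      obtain ⟨L, hL⟩ := n12 c
      obtain ⟨M, hM⟩ := n21 1
      refine ⟨L.comp M + M.comp L, fun v => ?_⟩
      rw [LinearMap.add_apply, LinearMap.comp_apply, LinearMap.comp_apply, ← hL, ← hM, ← hM, ← hL]
      simp only [h2]
      rw [← map_add]; congr 1; ext <;> simp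
    obtain ⟨A, hA⟩ := hA
    replace hA : ∀ v, f (c • f' v) = A v := hA
    -- commutes
    have c1 : ∀ v : F × F, A (v.2, 0) = ((A v).2, 0) := by
      intro v
      obtain ⟨N, hN⟩ := m12 1
      rw [← hA, ← hA]
      have e1 := hN (f' v)
      have e2 := hN (c • f' v)
      rw [map_smul, ← e1] at e2
      simp only [h1, one_mul] at e2
      rw [← e2, h1]
    have c2 : ∀ v : F × F, A (0, v.1) = (0, (A v).1) := by
      intro v
      obtain ⟨N, hN⟩ := m21 1
      rw [← hA, ← hA]
      have e1 := hN (f' v)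
      have e2 := hN (c • f' v)
      rw [map_smul, ← e1] at e2
      simp only [h1, one_mul] at e2
      rw [← e2, h1]
    refine ⟨(A (1, 0)).1, fun v => ?_⟩
    have e : A (f v) = f (c • v) := by rw [← hA, h2]
    rw [← e]
    set w := f v
    have d1 := c1 (0, 1)
    have d2 := c2 (1, 0)
    have dw : w = w.1 • (1, 0) + w.2 • (0, 1) := by ext <;> simp
    have e10 : A (1, 0) = ((A (1,0)).1, 0) := by
      have := congrArg Prod.snd d1
      simp at this
      ext <;> simp [this]
    have e01 : A (0, 1) = (0, (A (1,0)).1) := d2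
    rw [dw, map_add, map_smul, map_smul, e10, e01]
    ext <;> simp [mul_comm]
  choose s hs using key
  have fsurj : ∀ w, ∃ v, f v = w := fun w => ⟨_, h1 w⟩
  obtain ⟨v0, hv0⟩ := fsurj (1, 0)
  have cancel : ∀ a b : F, a • ((1, 0) : F × F) = b • (1, 0) → a = b := by
    intro a b h
    simpa using h
  refine ⟨⟨⟨⟨s, ?_⟩, ?_⟩, ?_, ?_⟩, fun c v => hs c v⟩
  · apply cancel; rw [← hv0, ← hs]; simp
  · intro x y; apply cancel; simp only [← hv0]; rw [mul_smul, ← hs, ← hs, ← hs, mul_smul]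
  · apply cancel; simp only [← hv0]; rw [← hs]; simp
  · intro x y; apply cancel
    dsimp only
    simp only [← hv0]; rw [add_smul, ← hs, ← hs, ← hs, add_smul, map_add]

lemma semilin_grp {G : Type*} [Group G] (e : F × F → G) (hinj : Function.Injective e)
    (hadd : ∀ v w, e (v + w) = e v * e w)
    (hlin : ∀ g : G, (∀ v, ∃ w, g * e v * g⁻¹ = e w) →
      ∃ L : F × F →ₗ[F] F × F, ∀ v, g * e v * g⁻¹ = e (L v))
    (ht12 : ∀ c, ∃ g : G, ∀ v, g * e v * g⁻¹ = e (v.1 + c * v.2, v.2))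
    (ht21 : ∀ c, ∃ g : G, ∀ v, g * e v * g⁻¹ = e (v.1, v.2 + c * v.1))
    (φ : MulAut G) (hφ : ∀ v, ∃ w, φ (e v) = e w) (hφ' : ∀ v, ∃ w, φ⁻¹ (e v) = e w) :
    ∃ (f : F × F →+ F × F) (σ : F →+* F), (∀ v, φ (e v) = e (f v)) ∧
      ∀ c v, f (c • v) = σ c • f v := by
  choose f hf using hφ
  choose f' hf' using hφ'
  have fadd : ∀ v w, f (v + w) = f v + f w := by
    intro v w; apply hinj; rw [hadd, ← hf, ← hf, ← hf, hadd, map_mul]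
  have fadd' : ∀ v w, f' (v + w) = f' v + f' w := by
    intro v w; apply hinj; rw [hadd, ← hf', ← hf', ← hf', hadd, map_mul]
  have h1 : ∀ v, f (f' v) = v := by
    intro v; apply hinj; rw [← hf, ← hf']; exact MulAut.apply_inv_self _ φ _
  have h2 : ∀ v, f' (f v) = v := by
    intro v; apply hinj; rw [← hf', ← hf]; exact MulAut.inv_apply_self _ φ _
  have tr : ∀ T : F × F → F × F, (∃ g : G, ∀ v, g * e v * g⁻¹ = e (T v)) →
      Lin (fun v => f (T (f' v))) ∧ Lin (fun v => f' (T (f v))) := by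
    rintro T ⟨g, hg⟩
    have k1 : ∀ v, φ g * e v * (φ g)⁻¹ = e (f (T (f' v))) := by
      intro v
      rw [← hf, ← hg, map_mul, map_mul, hf, h1, map_inv]
    have k2 : ∀ v, φ⁻¹ g * e v * (φ⁻¹ g)⁻¹ = e (f' (T (f v))) := by
      intro v
      rw [← hf', ← hg, map_mul, map_mul, hf', h2, map_inv]
    constructor
    · obtain ⟨L, hL⟩ := hlin _ (fun v => ⟨_, k1 v⟩)
      exact ⟨L, fun v => hinj (by rw [← hL, ← k1])⟩
    · obtain ⟨L, hL⟩ := hlin _ (fun v => ⟨_, k2 v⟩)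
      exact ⟨L, fun v => hinj (by rw [← hL, ← k2])⟩
  obtain ⟨σ, hσ⟩ := semilin (AddMonoidHom.mk' f fadd) (AddMonoidHom.mk' f' fadd') h1 h2
    (fun c => (tr _ (ht12 c)).1) (fun c => (tr _ (ht21 c)).1)
    (fun c => (tr _ (ht12 c)).2) (fun c => (tr _ (ht21 c)).2)
  exact ⟨AddMonoidHom.mk' f fadd, σ, hf, hσ⟩

end semilin
end PSLAux

namespace PSLAux
open Matrix Matrix.SpecialLinearGroup
open scoped MatrixGroups

section subs
variable {F : Type*} [Field F]

lemma uG_inv (x y z : F) : (uG x y z)⁻¹ = uG (-x) (-y) (-z + x * y) := by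
  rw [inv_eq_iff_mul_eq_one, uG_mul, ← uG_zero]
  congr 1 <;> ring

variable (F) in
/-- the Sylow subgroup -/
def T0 : Subgroup PSL(3, F) where
  carrier := {g | ∃ x y z : F, g = uG x y z}
  one_mem' := ⟨0, 0, 0, uG_zero.symm⟩
  mul_mem' := by
    rintro _ _ ⟨x, y, z, rfl⟩ ⟨x', y', z', rfl⟩
    exact ⟨_, _, _, uG_mul _ _ _ _ _ _⟩
  inv_mem' := by
    rintro _ ⟨x, y, z, rfl⟩
    exact ⟨_, _, _, uG_inv _ _ _⟩

variable (F) in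
/-- first elementary abelian subgroup -/
def E1 : Subgroup PSL(3, F) where
  carrier := {g | ∃ y z : F, g = uG 0 y z}
  one_mem' := ⟨0, 0, uG_zero.symm⟩
  mul_mem' := by
    rintro _ _ ⟨y, z, rfl⟩ ⟨y', z', rfl⟩
    exact ⟨y + y', z + z', by rw [uG_mul]; simp⟩
  inv_mem' := by
    rintro _ ⟨y, z, rfl⟩
    exact ⟨-y, -z, by rw [uG_inv]; simp⟩

variable (F) in
/-- second elementary abelian subgroup -/
def E2 : Subgroup PSL(3, F) where
  carrier := {g | ∃ x z : F, g = uG x 0 z}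
  one_mem' := ⟨0, 0, uG_zero.symm⟩
  mul_mem' := by
    rintro _ _ ⟨y, z, rfl⟩ ⟨y', z', rfl⟩
    exact ⟨y + y', z + z', by rw [uG_mul]; simp⟩
  inv_mem' := by
    rintro _ ⟨y, z, rfl⟩
    exact ⟨-y, -z, by rw [uG_inv]; simp⟩

lemma mem_T0 {g : PSL(3, F)} : g ∈ T0 F ↔ ∃ x y z : F, g = uG x y z := Iff.rfl
lemma mem_E1 {g : PSL(3, F)} : g ∈ E1 F ↔ ∃ y z : F, g = uG 0 y z := Iff.rfl
lemma mem_E2 {g : PSL(3, F)} : g ∈ E2 F ↔ ∃ x z : F, g = uG x 0 z := Iff.rfl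

lemma uG_mem_E1 {x y z : F} : uG x y z ∈ E1 F ↔ x = 0 := by
  constructor
  · rintro ⟨y', z', h⟩; exact (uG_inj h).1
  · rintro rfl; exact ⟨_, _, rfl⟩

lemma uG_mem_E2 {x y z : F} : uG x y z ∈ E2 F ↔ y = 0 := by
  constructor
  · rintro ⟨y', z', h⟩; exact (uG_inj h).2.1
  · rintro rfl; exact ⟨_, _, rfl⟩

/-- `φ` stabilises `E1` and `E2` -/
def Stab (φ : MulAut PSL(3, F)) : Prop := (∀ g, φ g ∈ E1 F ↔ g ∈ E1 F) ∧ (∀ g, φ g ∈ E2 F ↔ g ∈ E2 F)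

/-- `φ` swaps `E1` and `E2` -/
def Swap (φ : MulAut PSL(3, F)) : Prop := (∀ g, φ g ∈ E1 F ↔ g ∈ E2 F) ∧ (∀ g, φ g ∈ E2 F ↔ g ∈ E1 F)

lemma Stab.mul {φ ψ : MulAut PSL(3, F)} (h : Stab φ) (h' : Stab ψ) : Stab (φ * ψ) :=
  ⟨fun g => (h.1 _).trans (h'.1 _), fun g => (h.2 _).trans (h'.2 _)⟩

lemma Swap.mul {φ ψ : MulAut PSL(3, F)} (h : Swap φ) (h' : Swap ψ) : Stab (φ * ψ) :=
  ⟨fun g => (h.1 _).trans (h'.2 _), fun g => (h.2 _).trans (h'.1 _)⟩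

lemma Stab.inv {φ : MulAut PSL(3, F)} (h : Stab φ) : Stab (φ⁻¹) :=
  ⟨fun g => by rw [← h.1, MulAut.apply_inv_self], fun g => by rw [← h.2, MulAut.apply_inv_self]⟩

lemma stab_conj {t : PSL(3, F)} (ht : t ∈ T0 F) : Stab (MulAut.conj t) := by
  have h1 : ∀ t ∈ T0 F, ∀ g ∈ E1 F, t * g * t⁻¹ ∈ E1 F := by
    rintro _ ⟨x, y, z, rfl⟩ _ ⟨y', z', rfl⟩
    rw [uG_inv, uG_mul, uG_mul, uG_mem_E1]; ring
  have h2 : ∀ t ∈ T0 F, ∀ g ∈ E2 F, t * g * t⁻¹ ∈ E2 F := by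
    rintro _ ⟨x, y, z, rfl⟩ _ ⟨y', z', rfl⟩
    rw [uG_inv, uG_mul, uG_mul, uG_mem_E2]; ring
  refine ⟨fun g => ⟨fun h => ?_, h1 t ht g⟩, fun g => ⟨fun h => ?_, h2 t ht g⟩⟩
  · have := h1 _ (inv_mem ht) _ h
    rw [MulAut.conj_apply] at this
    convert this using 1; group
  · have := h2 _ (inv_mem ht) _ h
    rw [MulAut.conj_apply] at this
    convert this using 1; group

lemma conj_of_cm (g : SL(3, F)) {x y z x' y' z' : F}
    (h : cm g * cm (um x y z) = cm (um x' y' z') * cm g) :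
    pr g * uG x y z * (pr g)⁻¹ = uG x' y' z' := by
  rw [← map_mul, ← map_mul] at h
  have := congrArg pr (cm_inj h)
  rw [map_mul, map_mul] at this
  rw [mul_inv_eq_iff_eq_mul]
  exact this

variable [CharP F 2]

lemma neg_eq' (x : F) : -x = x := CharTwo.neg_eq x

lemma semiE1 (φ : MulAut PSL(3, F)) (h : Stab φ) :
    ∃ (f : F × F →+ F × F) (σ : F →+* F), (∀ v : F × F, φ (uG 0 v.1 v.2) = uG 0 (f v).1 (f v).2) ∧
      ∀ (c : F) v, f (c • v) = σ c • f v := by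
  refine semilin_grp (fun v : F × F => uG (0 : F) v.1 v.2) ?_ ?_ ?_ ?_ ?_ φ ?_ ?_
  · intro v w h
    have := uG_inj h
    exact Prod.ext this.2.1 this.2.2
  · intro v w; rw [uG_mul]; simp
  · intro g hg
    obtain ⟨A, h1, h2, h3⟩ := conj_lin g
    refine ⟨⟨⟨fun v => (A 1 2 0 v.1 v.2, A 0 2 0 v.1 v.2), ?_⟩, ?_⟩, ?_⟩
    · intro v w
      have a1 := h1 1 2 0 v.1 v.2 0 w.1 w.2
      have a2 := h1 0 2 0 v.1 v.2 0 w.1 w.2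
      rw [add_zero] at a1 a2
      ext
      · simpa using a1
      · simpa using a2
    · intro c v
      have a1 := h2 1 2 c 0 v.1 v.2
      have a2 := h2 0 2 c 0 v.1 v.2
      rw [mul_zero] at a1 a2
      ext
      · simpa using a1
      · simpa using a2
    · intro v
      obtain ⟨w, hw⟩ := hg v
      have := h3 _ _ _ _ _ _ hw
      rw [hw]
      change uG 0 w.1 w.2 = uG 0 (A 1 2 0 v.1 v.2) (A 0 2 0 v.1 v.2)
      rw [← this.2.1, ← this.2.2]
  · intro c
    refine ⟨pr (mkSL !![1, 0, 0; c, 1, 0; 0, 0, 1] (by simp [Matrix.det_fin_three])), fun v => ?_⟩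
    apply conj_of_cm
    rw [cm_mkSL, cm_um, cm_um]
    ext i j
    fin_cases i <;> fin_cases j <;> simp [Matrix.mul_apply, Fin.sum_univ_three] <;> ring
  · intro c
    refine ⟨pr (mkSL !![1, c, 0; 0, 1, 0; 0, 0, 1] (by simp [Matrix.det_fin_three])), fun v => ?_⟩
    apply conj_of_cm
    rw [cm_mkSL, cm_um, cm_um]
    ext i j
    fin_cases i <;> fin_cases j <;> simp [Matrix.mul_apply, Fin.sum_univ_three] <;> ring
  · intro v
    obtain ⟨y, z, h⟩ := (h.1 (uG 0 v.1 v.2)).2 ⟨_, _, rfl⟩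
    exact ⟨(y, z), h⟩
  · intro v
    obtain ⟨y, z, h⟩ := (h.inv.1 (uG 0 v.1 v.2)).2 ⟨_, _, rfl⟩
    exact ⟨(y, z), h⟩

lemma semiE2 (φ : MulAut PSL(3, F)) (h : Stab φ) :
    ∃ (f : F × F →+ F × F) (σ : F →+* F), (∀ v : F × F, φ (uG v.1 0 v.2) = uG (f v).1 0 (f v).2) ∧
      ∀ (c : F) v, f (c • v) = σ c • f v := by
  refine semilin_grp (fun v : F × F => uG v.1 (0 : F) v.2) ?_ ?_ ?_ ?_ ?_ φ ?_ ?_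
  · intro v w h
    have := uG_inj h
    exact Prod.ext this.1 this.2.2
  · intro v w; rw [uG_mul]; simp
  · intro g hg
    obtain ⟨A, h1, h2, h3⟩ := conj_lin g
    refine ⟨⟨⟨fun v => (A 0 1 v.1 0 v.2, A 0 2 v.1 0 v.2), ?_⟩, ?_⟩, ?_⟩
    · intro v w
      have a1 := h1 0 1 v.1 0 v.2 w.1 0 w.2
      have a2 := h1 0 2 v.1 0 v.2 w.1 0 w.2
      rw [add_zero] at a1 a2
      ext
      · simpa using a1
      · simpa using a2
    · intro c v
      have a1 := h2 0 1 c v.1 0 v.2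
      have a2 := h2 0 2 c v.1 0 v.2
      rw [mul_zero] at a1 a2
      ext
      · simpa using a1
      · simpa using a2
    · intro v
      obtain ⟨w, hw⟩ := hg v
      have := h3 _ _ _ _ _ _ hw
      rw [hw]
      change uG w.1 0 w.2 = uG (A 0 1 v.1 0 v.2) 0 (A 0 2 v.1 0 v.2)
      rw [← this.1, ← this.2.2]
  · intro c
    refine ⟨pr (mkSL !![1, 0, 0; 0, 1, 0; 0, c, 1] (by simp [Matrix.det_fin_three])), fun v => ?_⟩
    apply conj_of_cm
    rw [cm_mkSL, cm_um, cm_um]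
    ext i j
    fin_cases i <;> fin_cases j <;> simp [Matrix.mul_apply, Fin.sum_univ_three] <;>
      linear_combination (-(c * v.2)) * two_eq (F := F)
  · intro c
    refine ⟨pr (mkSL !![1, 0, 0; 0, 1, c; 0, 0, 1] (by simp [Matrix.det_fin_three])), fun v => ?_⟩
    apply conj_of_cm
    rw [cm_mkSL, cm_um, cm_um]
    ext i j
    fin_cases i <;> fin_cases j <;> simp [Matrix.mul_apply, Fin.sum_univ_three] <;>
      linear_combination (-(c * v.1)) * two_eq (F := F)
  · intro v
    obtain ⟨y, z, h⟩ := (h.2 (uG v.1 0 v.2)).2 ⟨_, _, rfl⟩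
    exact ⟨(y, z), h⟩
  · intro v
    obtain ⟨y, z, h⟩ := (h.inv.2 (uG v.1 0 v.2)).2 ⟨_, _, rfl⟩
    exact ⟨(y, z), h⟩

/-- explicit semilinear form on `T0` -/
def Semi (φ : MulAut PSL(3, F)) (σ : F →+* F) (a b c d e : F) : Prop :=
  ∀ x y z, φ (uG x y z) = uG (σ x * a) (σ y * b) (σ y * d + σ x * c + σ z * e)

lemma uG_ne {φ : MulAut PSL(3, F)} {x y z : F} (h : φ (uG x y z) = uG 0 0 0) : x = 0 ∧ y = 0 ∧ z = 0 := by
  rw [uG_zero, map_eq_one_iff φ φ.injective, ← uG_zero] at h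
  exact uG_inj h

lemma semi_main (φ : MulAut PSL(3, F)) (h : Stab φ) :
    ∃ σ a b c d e, Semi φ σ a b c d e ∧ a ≠ 0 ∧ b ≠ 0 ∧ e ≠ 0 := by
  obtain ⟨f, σ, hf, hs⟩ := semiE1 φ h
  obtain ⟨g, τ, hg, ht⟩ := semiE2 φ h
  have f01 : (f (0, 1)).1 = 0 := by
    have h1 := hf (0, 1)
    have h2 := (h.2 (uG 0 (0:F) 1)).2 ⟨_, _, rfl⟩
    dsimp only at h1
    rw [h1, uG_mem_E2] at h2
    exact h2
  have g01 : (g (0, 1)).1 = 0 := by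
    have h1 := hg (0, 1)
    have h2 := (h.1 (uG 0 (0:F) 1)).2 ⟨_, _, rfl⟩
    dsimp only at h1
    rw [h1, uG_mem_E1] at h2
    exact h2
  have f0 : ∀ z, f (0, z) = (0, σ z * (f (0, 1)).2) := by
    intro z
    have := hs z (0, 1)
    simp only [Prod.smul_mk, smul_eq_mul, mul_zero, mul_one] at this
    rw [this]; ext <;> simp [f01]
  have g0 : ∀ z, g (0, z) = (0, τ z * (g (0, 1)).2) := by
    intro z
    have := ht z (0, 1)
    simp only [Prod.smul_mk, smul_eq_mul, mul_zero, mul_one] at this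
    rw [this]; ext <;> simp [g01]
  have f1 : ∀ y, f (y, 0) = (σ y * (f (1, 0)).1, σ y * (f (1, 0)).2) := by
    intro z
    have := hs z (1, 0)
    simp only [Prod.smul_mk, smul_eq_mul, mul_zero, mul_one] at this
    rw [this]; ext <;> simp
  have g1 : ∀ y, g (y, 0) = (τ y * (g (1, 0)).1, τ y * (g (1, 0)).2) := by
    intro z
    have := ht z (1, 0)
    simp only [Prod.smul_mk, smul_eq_mul, mul_zero, mul_one] at this
    rw [this]; ext <;> simp
  have fz : ∀ z, φ (uG 0 0 z) = uG 0 0 (σ z * (f (0, 1)).2) := by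
    intro z; have := hf (0, z); rw [f0] at this; exact this
  have gz : ∀ z, φ (uG 0 0 z) = uG 0 0 (τ z * (g (0, 1)).2) := by
    intro z; have := hg (0, z); rw [g0] at this; exact this
  have hzz : ∀ z, σ z * (f (0, 1)).2 = τ z * (g (0, 1)).2 := by
    intro z
    have := fz z
    rw [gz z] at this
    exact (uG_inj this).2.2.symm
  have e0 : (f (0, 1)).2 ≠ 0 := by
    intro h0
    have := fz 1
    rw [h0, mul_zero] at this
    exact one_ne_zero (uG_ne this).2.2
  have hst : σ = τ := by
    ext z
    have h1 := hzz 1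
    rw [map_one, map_one, one_mul, one_mul] at h1
    have h2 := hzz z
    rw [← h1] at h2
    exact mul_right_cancel₀ e0 h2
  subst hst
  have fy : ∀ y, φ (uG 0 y 0) = uG 0 (σ y * (f (1, 0)).1) (σ y * (f (1, 0)).2) := by
    intro z; have := hf (z, 0); rw [f1] at this; exact this
  have gx : ∀ y, φ (uG y 0 0) = uG (σ y * (g (1, 0)).1) 0 (σ y * (g (1, 0)).2) := by
    intro z; have := hg (z, 0); rw [g1] at this; exact this
  refine ⟨σ, (g (1, 0)).1, (f (1, 0)).1, (g (1, 0)).2, (f (1, 0)).2, (f (0, 1)).2, ?_, ?_, ?_, e0⟩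
  · intro x y z
    have : uG x y z = uG 0 y 0 * uG x 0 0 * uG 0 0 z := by
      rw [uG_mul, uG_mul]; simp
    rw [this, map_mul, map_mul, fy, gx, fz, uG_mul, uG_mul]
    simp
  · intro h0
    have h1 := gx 1
    rw [h0, mul_zero] at h1
    have := (h.1 (uG (1:F) 0 0)).1 (by rw [h1]; exact ⟨_, _, rfl⟩)
    rw [uG_mem_E1] at this
    exact one_ne_zero this
  · intro h0
    have h1 := fy 1
    rw [h0, mul_zero] at h1
    have := (h.2 (uG (0:F) 1 0)).1 (by rw [h1]; exact ⟨_, _, rfl⟩)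
    rw [uG_mem_E2] at this
    exact one_ne_zero this

end subs
end PSLAux

namespace PSLAux
open Matrix Matrix.SpecialLinearGroup
open scoped MatrixGroups

section gen
variable {F : Type*} [Field F] [CharP F 2]

lemma hone (F : Type*) [Field F] [CharP F 2] : (-1 : F) = 1 := CharTwo.neg_eq 1

variable (F) in
/-- Weyl element -/
def n1 : SL(3, F) := mkSL !![0, 1, 0; 1, 0, 0; 0, 0, 1] (by
  simp [Matrix.det_fin_three, hone])

variable (F) in
/-- Weyl element -/
def n2 : SL(3, F) := mkSL !![1, 0, 0; 0, 0, 1; 0, 1, 0] (by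
  simp [Matrix.det_fin_three, hone])

lemma n1_sq : n1 F * n1 F = 1 := by
  apply cm_inj; rw [map_mul, n1, cm_mkSL, map_one]
  ext i j
  fin_cases i <;> fin_cases j <;> simp [Matrix.mul_apply, Fin.sum_univ_three]

lemma n2_sq : n2 F * n2 F = 1 := by
  apply cm_inj; rw [map_mul, n2, cm_mkSL, map_one]
  ext i j
  fin_cases i <;> fin_cases j <;> simp [Matrix.mul_apply, Fin.sum_univ_three]

lemma cm_tr {i j : Fin 3} (hij : i ≠ j) (a : F) :
    cm (SpecialLinearGroup.transvection hij a) = Matrix.transvection i j a := rfl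

lemma gen_top (H : Subgroup PSL(3, F)) (hT : T0 F ≤ H) (h1 : pr (n1 F) ∈ H) (h2 : pr (n2 F) ∈ H) :
    H = ⊤ := by
  have hu : ∀ x y z : F, pr (um x y z) ∈ H := fun x y z => hT ⟨x, y, z, rfl⟩
  have key : H.comap pr = ⊤ := by
    apply closed_eq_top
    intro i j hij a
    rw [Subgroup.mem_comap]
    have l10 : pr (n1 F * um a 0 0 * n1 F) ∈ H := by
      rw [map_mul, map_mul]; exact mul_mem (mul_mem h1 (hu _ _ _)) h1
    have l21 : pr (n2 F * um 0 a 0 * n2 F) ∈ H := by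
      rw [map_mul, map_mul]; exact mul_mem (mul_mem h2 (hu _ _ _)) h2
    have l20 : pr (n1 F * (n2 F * um 0 a 0 * n2 F) * n1 F) ∈ H := by
      rw [map_mul, map_mul]; exact mul_mem (mul_mem h1 l21) h1
    have cl : ∀ g : SL(3, F), pr g ∈ H → cm g = Matrix.transvection i j a →
        pr (SpecialLinearGroup.transvection hij a) ∈ H := by
      intro g hg h
      rw [← cm_tr hij] at h
      rwa [← cm_inj h]
    fin_cases i <;> fin_cases j
    · exact absurd rfl hij
    · refine cl _ (hu a 0 0) ?_
      rw [cm_um]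
      ext i j
      fin_cases i <;> fin_cases j <;> simp [Matrix.transvection]
    · refine cl _ (hu 0 0 a) ?_
      rw [cm_um]
      ext i j
      fin_cases i <;> fin_cases j <;> simp [Matrix.transvection]
    · refine cl _ l10 ?_
      rw [map_mul, map_mul, cm_um, n1, cm_mkSL]
      ext i j
      fin_cases i <;> fin_cases j <;> simp [Matrix.transvection, Matrix.mul_apply, Fin.sum_univ_three]
    · exact absurd rfl hij
    · refine cl _ (hu 0 a 0) ?_
      rw [cm_um]
      ext i j
      fin_cases i <;> fin_cases j <;> simp [Matrix.transvection]
    · refine cl _ l20 ?_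
      rw [map_mul, map_mul, map_mul, map_mul, cm_um, n1, n2, cm_mkSL, cm_mkSL]
      ext i j
      fin_cases i <;> fin_cases j <;> simp [Matrix.transvection, Matrix.mul_apply, Fin.sum_univ_three]
    · refine cl _ l21 ?_
      rw [map_mul, map_mul, cm_um, n2, cm_mkSL]
      ext i j
      fin_cases i <;> fin_cases j <;> simp [Matrix.transvection, Matrix.mul_apply, Fin.sum_univ_three]
    · exact absurd rfl hij
  rw [eq_top_iff]
  intro g _
  obtain ⟨g, rfl⟩ := pr_surj g
  have : g ∈ H.comap pr := by rw [key]; trivial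
  exact this

/-- diagonal elements -/
def dg (p q r : F) (h : p * q * r = 1) : SL(3, F) := mkSL !![p, 0, 0; 0, q, 0; 0, 0, r] (by
  simp [Matrix.det_fin_three, h])

lemma dg_conj (p q r : F) (h : p * q * r = 1) (x y z x' y' z' : F)
    (hx : p * x = x' * q) (hy : q * y = y' * r) (hz : p * z = z' * r) :
    pr (dg p q r h) * uG x y z * (pr (dg p q r h))⁻¹ = uG x' y' z' := by
  apply conj_of_cm
  rw [dg, cm_mkSL, cm_um, cm_um]
  ext i j
  fin_cases i <;> fin_cases j <;> simp [Matrix.mul_apply, Fin.sum_univ_three, hx, hy, hz]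

lemma dg_comm (p q r : F) (h : p * q * r = 1) (p' q' r' : F) (h' : p' * q' * r' = 1) :
    pr (dg p q r h) * pr (dg p' q' r' h') = pr (dg p' q' r' h') * pr (dg p q r h) := by
  rw [← map_mul, ← map_mul]
  congr 1
  apply cm_inj
  rw [map_mul, map_mul, dg, dg, cm_mkSL, cm_mkSL]
  ext i j
  fin_cases i <;> fin_cases j <;> simp [Matrix.mul_apply, Fin.sum_univ_three, mul_comm]

lemma dg_n1 (p q r : F) (h : p * q * r = 1) (h' : q * p * r = 1) :
    pr (n1 F) * pr (dg p q r h) = pr (dg q p r h') * pr (n1 F) := by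
  rw [← map_mul, ← map_mul]
  congr 1
  apply cm_inj
  rw [map_mul, map_mul, dg, dg, n1, cm_mkSL, cm_mkSL, cm_mkSL]
  ext i j
  fin_cases i <;> fin_cases j <;> simp [Matrix.mul_apply, Fin.sum_univ_three, mul_comm]

lemma dg_n2 (p q r : F) (h : p * q * r = 1) (h' : p * r * q = 1) :
    pr (n2 F) * pr (dg p q r h) = pr (dg p r q h') * pr (n2 F) := by
  rw [← map_mul, ← map_mul]
  congr 1
  apply cm_inj
  rw [map_mul, map_mul, dg, dg, n2, cm_mkSL, cm_mkSL, cm_mkSL]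
  ext i j
  fin_cases i <;> fin_cases j <;> simp [Matrix.mul_apply, Fin.sum_univ_three, mul_comm]

lemma n1_conj (y z : F) : pr (n1 F) * uG 0 y z * (pr (n1 F))⁻¹ = uG 0 z y := by
  apply conj_of_cm
  rw [n1, cm_mkSL, cm_um, cm_um]
  ext i j
  fin_cases i <;> fin_cases j <;> simp [Matrix.mul_apply, Fin.sum_univ_three]

lemma n2_conj (x z : F) : pr (n2 F) * uG x 0 z * (pr (n2 F))⁻¹ = uG z 0 x := by
  apply conj_of_cm
  rw [n2, cm_mkSL, cm_um, cm_um]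
  ext i j
  fin_cases i <;> fin_cases j <;> simp [Matrix.mul_apply, Fin.sum_univ_three]

/-- generic step: if `φ` fixes `t` and `n t n⁻¹` for all `t` in a set, `n⁻¹ φ n` centralizes it -/
lemma comm_of_fix {G : Type*} [Group G] (φ : MulAut G) (n t t' : G) (h : n * t * n⁻¹ = t')
    (ht : φ t = t) (ht' : φ t' = t') : (n⁻¹ * φ n) * t = t * (n⁻¹ * φ n) := by
  have : φ n * t * (φ n)⁻¹ = n * t * n⁻¹ := by
    nth_rw 1 [← ht]
    rw [← map_inv, ← map_mul, ← map_mul, h, ht']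
  have h2 : φ n * t = n * t * n⁻¹ * φ n := by rw [← this]; group
  rw [mul_assoc, h2]; group

lemma factC_aux (ψ : MulAut PSL(3, F)) (hψ : ∀ x y z : F, ψ (uG x y z) = uG x y z)
    (w : F) (hw0 : w ≠ 0) (hw1 : w ≠ 1) (hd : w * 1 * w⁻¹ = 1)
    (h0 : ψ (pr (dg w 1 w⁻¹ hd)) = pr (dg w 1 w⁻¹ hd)) : ψ = 1 := by
  have hww : w ^ 2 ≠ 1 := by
    intro h
    have : (w - 1) ^ 2 = 0 := by
      have := two_eq (F := F)
      linear_combination h - (w - 1) * this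
    exact hw1 (sub_eq_zero.1 (pow_eq_zero_iff (two_ne_zero) |>.1 this))
  have hdiag : ∀ p q r h, ψ (pr (dg (F := F) p q r h)) = pr (dg p q r h) := by
    intro p q r h
    have hp : p ≠ 0 := by rintro rfl; simp at h
    have hq : q ≠ 0 := by rintro rfl; simp at h
    have hr : r ≠ 0 := by rintro rfl; simp at h
    set D := pr (dg p q r h) with hD
    have hc : ∀ x y z : F, (D⁻¹ * ψ D) * uG x y z = uG x y z * (D⁻¹ * ψ D) := by
      intro x y z
      exact comm_of_fix ψ D _ (uG (p * x / q) (q * y / r) (p * z / r))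
        (dg_conj p q r h _ _ _ _ _ _ (by field_simp) (by field_simp) (by field_simp)) (hψ _ _ _) (hψ _ _ _)
    obtain ⟨y, z, e1⟩ := cent_E1 _ (fun y z => hc 0 y z)
    obtain ⟨x, z', e2⟩ := cent_E2 _ (fun x z => hc x 0 z)
    have := uG_inj (e1.symm.trans e2)
    have hy := this.2.1
    subst hy
    -- commutes with h0
    have c0 : pr (dg w 1 w⁻¹ hd) * (D⁻¹ * ψ D) * (pr (dg w 1 w⁻¹ hd))⁻¹ = D⁻¹ * ψ D := by
      have c1 := dg_comm w 1 w⁻¹ hd p q r h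
      rw [← hD] at c1
      have c2 := congrArg ψ c1
      rw [map_mul, map_mul, h0] at c2
      rw [mul_inv_eq_iff_eq_mul]
      calc _ = (pr (dg w 1 w⁻¹ hd) * D⁻¹) * ψ D := by group
        _ = (D⁻¹ * pr (dg w 1 w⁻¹ hd)) * ψ D := by
          congr 1
          rw [eq_inv_mul_iff_mul_eq, ← mul_assoc, ← c1]; group
        _ = _ := by rw [mul_assoc, c2]; group
    rw [e1] at c0
    rw [dg_conj w 1 w⁻¹ hd 0 0 z 0 0 (w ^ 2 * z) (by simp) (by simp) (by field_simp)] at c0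
    have hz := (uG_inj c0).2.2
    have hz0 : z = 0 := by
      have : (w ^ 2 - 1) * z = 0 := by linear_combination hz
      exact (mul_eq_zero.1 this).resolve_left (sub_ne_zero.2 hww)
    rw [hz0, uG_zero, inv_mul_eq_one] at e1
    exact e1.symm
  have hn1 : ψ (pr (n1 F)) = pr (n1 F) := by
    set N := pr (n1 F) with hN
    obtain ⟨y, z, e⟩ := cent_E1 (N⁻¹ * ψ N) (fun y z => comm_of_fix ψ N _ _ (n1_conj y z) (hψ _ _ _) (hψ _ _ _))
    have c := comm_of_fix ψ N (pr (dg 1 w w⁻¹ (by field_simp))) (pr (dg w 1 w⁻¹ hd))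
      (by rw [hN, dg_n1 1 w w⁻¹ (by field_simp) hd]; group) (hdiag _ _ _ _) (hdiag _ _ _ _)
    rw [e] at c
    have c2 := dg_conj 1 w w⁻¹ (by field_simp) 0 y z 0 (w ^ 2 * y) (w * z) (by simp) (by field_simp) (by field_simp)
    rw [← c] at c2
    rw [mul_inv_cancel_right] at c2
    obtain ⟨-, hy, hz⟩ := uG_inj c2
    have hy0 : y = 0 := by
      have : (w ^ 2 - 1) * y = 0 := by linear_combination -hy
      exact (mul_eq_zero.1 this).resolve_left (sub_ne_zero.2 hww)
    have hz0 : z = 0 := by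
      have : (w - 1) * z = 0 := by linear_combination -hz
      exact (mul_eq_zero.1 this).resolve_left (sub_ne_zero.2 hw1)
    rw [hy0, hz0, uG_zero, inv_mul_eq_one] at e
    exact e.symm
  have hn2 : ψ (pr (n2 F)) = pr (n2 F) := by
    set N := pr (n2 F) with hN
    obtain ⟨y, z, e⟩ := cent_E2 (N⁻¹ * ψ N) (fun y z => comm_of_fix ψ N _ _ (n2_conj y z) (hψ _ _ _) (hψ _ _ _))
    have c := comm_of_fix ψ N (pr (dg w w⁻¹ 1 (by field_simp))) (pr (dg w 1 w⁻¹ hd))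
      (by rw [hN, dg_n2 w w⁻¹ 1 (by field_simp) hd]; group) (hdiag _ _ _ _) (hdiag _ _ _ _)
    rw [e] at c
    have c2 := dg_conj w w⁻¹ 1 (by field_simp) y 0 z (w ^ 2 * y) 0 (w * z) (by field_simp) (by simp) (by field_simp)
    rw [← c] at c2
    rw [mul_inv_cancel_right] at c2
    obtain ⟨hy, -, hz⟩ := uG_inj c2
    have hy0 : y = 0 := by
      have : (w ^ 2 - 1) * y = 0 := by linear_combination -hy
      exact (mul_eq_zero.1 this).resolve_left (sub_ne_zero.2 hww)
    have hz0 : z = 0 := by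
      have : (w - 1) * z = 0 := by linear_combination -hz
      exact (mul_eq_zero.1 this).resolve_left (sub_ne_zero.2 hw1)
    rw [hy0, hz0, uG_zero, inv_mul_eq_one] at e
    exact e.symm
  let H : Subgroup PSL(3, F) := MonoidHom.eqLocus ψ.toMonoidHom (MonoidHom.id _)
  have hH : H = ⊤ := gen_top H (by rintro _ ⟨x, y, z, rfl⟩; exact hψ x y z) hn1 hn2
  ext g
  have : g ∈ H := by rw [hH]; trivial
  exact this

lemma factC (φ : MulAut PSL(3, F)) (hφ : ∀ x y z : F, φ (uG x y z) = uG x y z)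
    (w : F) (hw0 : w ≠ 0) (hw1 : w ≠ 1) : ∃ t ∈ T0 F, φ = MulAut.conj t := by
  have hd : w * 1 * w⁻¹ = 1 := by field_simp
  have hww : w ^ 2 ≠ 1 := by
    intro h
    have : (w - 1) ^ 2 = 0 := by
      have := two_eq (F := F)
      linear_combination h - (w - 1) * this
    exact hw1 (sub_eq_zero.1 (pow_eq_zero_iff (two_ne_zero) |>.1 this))
  have hww' : w ^ 2 - 1 ≠ 0 := sub_ne_zero.2 hww
  set D := pr (dg w 1 w⁻¹ hd) with hD
  have hc : ∀ x y z : F, (D⁻¹ * φ D) * uG x y z = uG x y z * (D⁻¹ * φ D) := by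
    intro x y z
    exact comm_of_fix φ D _ (uG (w * x) (w * y) (w ^ 2 * z))
      (dg_conj _ _ _ _ _ _ _ _ _ _ (by simp) (by field_simp) (by field_simp)) (hφ _ _ _) (hφ _ _ _)
  obtain ⟨y, s, e1⟩ := cent_E1 _ (fun y z => hc 0 y z)
  obtain ⟨x, z', e2⟩ := cent_E2 _ (fun x z => hc x 0 z)
  have := uG_inj (e1.symm.trans e2)
  have hy := this.2.1
  subst hy
  -- `D⁻¹ * φ D = uG 0 0 s`
  set u : F := w ^ 2 * s / (w ^ 2 - 1) with hu
  have hφD : φ D = D * uG 0 0 s := by rw [← e1]; group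
  have hψ : MulAut.conj (uG 0 0 u) * φ = 1 := by
    apply factC_aux _ _ w hw0 hw1 hd
    · change uG 0 0 u * φ D * (uG 0 0 u)⁻¹ = D
      rw [mul_inv_eq_iff_eq_mul, hφD]
      have : D * uG 0 0 (u - s) * D⁻¹ = uG 0 0 u :=
        dg_conj _ _ _ _ _ _ _ _ _ _ (by simp) (by simp) (by rw [hu]; field_simp; ring)
      have h2 : uG 0 0 (u - s) * uG 0 0 s = uG (0 : F) 0 u := by rw [uG_mul]; simp
      calc uG 0 0 u * (D * uG 0 0 s) = (D * uG 0 0 (u - s) * D⁻¹) * (D * uG 0 0 s) := by rw [this]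
        _ = D * (uG 0 0 (u - s) * uG 0 0 s) := by group
        _ = _ := by rw [h2]
    · intro x y z
      change uG 0 0 u * φ (uG x y z) * (uG 0 0 u)⁻¹ = _
      rw [hφ, mul_inv_eq_iff_eq_mul, uG_mul, uG_mul]
      congr 1 <;> ring
  refine ⟨(uG 0 0 u)⁻¹, inv_mem ⟨_, _, _, rfl⟩, ?_⟩
  rw [map_inv]
  exact eq_inv_of_mul_eq_one_right hψ

end gen
end PSLAux

namespace PSLAux
open Matrix Matrix.SpecialLinearGroup
open scoped MatrixGroups

section f2
variable {F : Type*} [Field F] [CharP F 2]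

lemma pow_two_one {a : F} {k : ℕ} (h : a ^ 2 ^ k = 1) : a = 1 := by
  have : (a - 1) ^ 2 ^ k = 0 := by
    rw [sub_pow_char_pow, h]; simp
  exact sub_eq_zero.1 (eq_zero_of_pow_eq_zero this)

lemma fact2 (φ : MulAut PSL(3, F)) (k : ℕ) (hk : φ ^ 2 ^ k = 1) (a b c d e : F)
    (h : Semi φ (RingHom.id F) a b c d e) (w : F) (hw0 : w ≠ 0) (hw1 : w ≠ 1) :
    ∃ t ∈ T0 F, φ = MulAut.conj t := by
  have h1 : ∀ n : ℕ, ∀ x y z : F, ∃ z', (φ ^ n) (uG x y z) = uG (x * a ^ n) (y * b ^ n) z' := by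
    intro n
    induction n with
    | zero => intro x y z; exact ⟨z, by simp⟩
    | succ n ih =>
      intro x y z
      rw [pow_succ, MulAut.mul_apply, h]
      obtain ⟨z', hz⟩ := ih (x * a) (y * b) (y * d + x * c + z * e)
      refine ⟨z', ?_⟩
      simp only [RingHom.id_apply]
      rw [hz]
      congr 1 <;> ring
  have h2 : ∀ n : ℕ, ∀ z : F, (φ ^ n) (uG 0 0 z) = uG 0 0 (z * e ^ n) := by
    intro n
    induction n with
    | zero => intro z; simp
    | succ n ih =>
      intro z
      rw [pow_succ, MulAut.mul_apply, h]
      simp only [RingHom.id_apply, zero_mul, zero_add, add_zero]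
      rw [ih]; congr 1; ring
  obtain ⟨z', h3⟩ := h1 (2 ^ k) 1 1 0
  have h4 := h2 (2 ^ k) 1
  rw [hk, MulAut.one_apply] at h3 h4
  obtain ⟨ha, hb, -⟩ := uG_inj h3
  have he := (uG_inj h4).2.2
  rw [one_mul] at ha hb he
  have ha := pow_two_one ha.symm
  have hb := pow_two_one hb.symm
  have he := pow_two_one he.symm
  subst ha hb he
  obtain ⟨t, ht, hc⟩ := factC ((MulAut.conj (uG d c 0))⁻¹ * φ) (by
    intro x y z
    rw [MulAut.mul_apply, h, ← map_inv, MulAut.conj_apply, inv_inv, mul_assoc, inv_mul_eq_iff_eq_mul, uG_mul, uG_mul]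
    simp only [RingHom.id_apply, mul_one]
    congr 1
    · ring
    · ring
    · linear_combination (x * c) * two_eq (F := F)) w hw0 hw1
  refine ⟨uG d c 0 * t, mul_mem ⟨_, _, _, rfl⟩ ht, ?_⟩
  rw [map_mul, ← hc]; group

lemma semi_comp {φ ψ : MulAut PSL(3, F)} {σ τ ρ : F →+* F} {a b c d e a' b' c' d' e' a'' b'' c'' d'' e'' : F}
    (h1 : Semi φ σ a b c d e) (h2 : Semi ψ τ a' b' c' d' e') (h3 : Semi (φ * ψ) ρ a'' b'' c'' d'' e'')
    (he : e'' ≠ 0) : ρ = σ.comp τ := by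
  have key : ∀ z, ρ z * e'' = σ (τ z) * (σ e' * e) := by
    intro z
    have := h3 0 0 z
    rw [MulAut.mul_apply, h2, h1] at this
    have := (uG_inj this).2.2
    simp at this
    rw [← this, mul_assoc]
  have k1 := key 1
  simp only [map_one, one_mul] at k1
  ext z
  have := key z
  rw [← k1] at this
  exact mul_right_cancel₀ he this

lemma semi_one : Semi (1 : MulAut PSL(3, F)) (RingHom.id F) 1 1 0 0 1 := by
  intro x y z; simp

lemma semi_inv {φ : MulAut PSL(3, F)} {σ : F →+* F} {a b c d e : F}
    (h1 : Semi φ σ a b c d e) (hφ : φ * φ = 1) : σ.comp σ = RingHom.id F := by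
  symm
  refine semi_comp (a'' := 1) (b'' := 1) (c'' := 0) (d'' := 0) (e'' := 1) h1 h1 ?_ one_ne_zero
  rw [hφ]; exact semi_one

lemma inv_unique [Finite F] (σ τ : F →+* F) (hσ : σ.comp σ = RingHom.id F)
    (hτ : τ.comp τ = RingHom.id F) (hσ1 : σ ≠ RingHom.id F) (hτ1 : τ ≠ RingHom.id F) :
    σ.comp τ = RingHom.id F := by
  letI : Algebra (ZMod 2) F := ZMod.algebra F 2
  have mk : ∀ σ : F →+* F, σ.comp σ = RingHom.id F → ∃ s : Gal(F/ZMod 2), (∀ x, s x = σ x) ∧ s ^ 2 = 1 := by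
    intro σ h
    have h' : ∀ x, σ (σ x) = x := fun x => RingHom.congr_fun h x
    let e : F ≃+* F := RingEquiv.ofRingHom σ σ h h
    refine ⟨AlgEquiv.ofRingEquiv (f := e) (fun r => ?_), fun x => rfl, ?_⟩
    · exact RingHom.congr_fun (Subsingleton.elim ((e : F →+* F).comp (algebraMap (ZMod 2) F)) (algebraMap (ZMod 2) F)) r
    · ext x; rw [pow_two]; exact h' x
  obtain ⟨s, hs, hs2⟩ := mk σ hσ
  obtain ⟨t, ht, ht2⟩ := mk τ hτ
  have hs1 : s ≠ 1 := by
    rintro rfl; apply hσ1; ext x; rw [← hs]; rfl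
  have ht1 : t ≠ 1 := by
    rintro rfl; apply hτ1; ext x; rw [← ht]; rfl
  have : s = t := by
    by_contra hst
    classical
    have : Fintype Gal(F/ZMod 2) := Fintype.ofFinite _
    have hc := IsCyclic.card_pow_eq_one_le (α := Gal(F/ZMod 2)) (n := 2) (by norm_num)
    have hsub : ({1, s, t} : Finset Gal(F/ZMod 2)) ⊆ Finset.univ.filter (fun a => a ^ 2 = 1) := by
      intro x hx
      simp only [Finset.mem_insert, Finset.mem_singleton] at hx
      rw [Finset.mem_filter]
      rcases hx with rfl | rfl | rfl <;> simp [hs2, ht2]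
    have h3 : ({1, s, t} : Finset Gal(F/ZMod 2)).card = 3 := by
      rw [Finset.card_eq_three]; exact ⟨1, s, t, hs1.symm, ht1.symm, hst, rfl⟩
    have := Finset.card_le_card hsub
    omega
  ext x
  rw [RingHom.comp_apply, ← hs, ← ht, ← this]
  have := DFunLike.congr_fun hs2 x
  rw [pow_two] at this
  exact this

end f2

section cnt

lemma fixcard {F M : Type*} [Field F] [AddCommGroup M] [Module F M] [Finite M] (f : M → M) (σ : F →+* F)
    (hadd : ∀ v w, f (v + w) = f v + f w) (hsm : ∀ (c : F) v, f (c • v) = σ c • f v)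
    (l : F) (hl : σ l ≠ l) : ({v | f v = v} : Set M).ncard ^ 2 ≤ Nat.card M := by
  set P : Set M := {v | f v = v} with hP
  have inj : Set.InjOn (fun p : M × M => p.1 + l • p.2) (P ×ˢ P) := by
    rintro ⟨v, w⟩ ⟨hv, hw⟩ ⟨v', w'⟩ ⟨hv', hw'⟩ h
    change f v = v at hv
    change f w = w at hw
    change f v' = v' at hv'
    change f w' = w' at hw'
    dsimp only at h
    have h2 := congrArg f h
    rw [hadd, hadd, hsm, hsm, hv, hw, hv', hw'] at h2
    have h3 : (σ l - l) • (w - w') = 0 := by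
      have e1 : l • (w - w') = v' - v := by
        rw [smul_sub, sub_eq_sub_iff_add_eq_add, add_comm, h, add_comm]
      have e2 : σ l • (w - w') = v' - v := by
        rw [smul_sub, sub_eq_sub_iff_add_eq_add, add_comm, h2, add_comm]
      rw [sub_smul, e1, e2, sub_self]
    have h4 : w = w' := sub_eq_zero.1 ((smul_eq_zero.1 h3).resolve_left (sub_ne_zero.2 hl))
    subst h4
    exact Prod.ext (add_right_cancel h) rfl
  rw [pow_two, ← Set.ncard_prod, ← Set.ncard_image_of_injOn inj, ← Set.ncard_univ]
  exact Set.ncard_le_ncard (Set.subset_univ _) Set.finite_univ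

lemma half {X : Type*} [Group X] [Finite X] (A B : Set X)
    (h : ∀ x ∈ A, ∀ y ∈ A, x ∉ B → y ∉ B → x * y ∈ B) : A.ncard ≤ 2 * B.ncard := by
  by_cases hA : A ⊆ B
  · have := Set.ncard_le_ncard hA (Set.toFinite _); omega
  · obtain ⟨g, hg, hgB⟩ := Set.not_subset.1 hA
    have hsub : A ⊆ B ∪ (fun x => g⁻¹ * x) '' B := by
      intro x hx
      by_cases hxB : x ∈ B
      · exact Or.inl hxB
      · exact Or.inr ⟨g * x, h g hg x hx hgB hxB, by simp⟩
    have h1 := Set.ncard_le_ncard hsub (Set.toFinite _)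
    have h2 := Set.ncard_union_le B ((fun x => g⁻¹ * x) '' B)
    have h3 := Set.ncard_image_le (f := fun x => g⁻¹ * x) (Set.toFinite B)
    omega

end cnt
end PSLAux

namespace PSLAux
open Matrix Matrix.SpecialLinearGroup
open scoped MatrixGroups

section key
variable {F : Type*} [Field F] [CharP F 2] [Finite F]

instance finPSL : Finite PSL(3, F) := by
  have : Finite SL(3, F) := Subtype.finite
  exact Finite.of_surjective _ (pr_surj (F := F))

lemma conj_injG : Function.Injective (MulAut.conj : PSL(3, F) →* MulAut PSL(3, F)) :=
  haveI := PSL3_simple (F := F)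
  conj_inj (center_bot_of_simple (PSL3_perfect (F := F)))

lemma fix_of_commG (φ : MulAut PSL(3, F)) (g : PSL(3, F))
    (h : φ * MulAut.conj g = MulAut.conj g * φ) : φ g = g :=
  haveI := PSL3_simple (F := F)
  fix_of_commute (center_bot_of_simple (PSL3_perfect (F := F))) φ g h

lemma uG_sq (x y z : F) (h : uG x y z * uG x y z = 1) : x = 0 ∨ y = 0 := by
  rw [uG_mul, ← uG_zero] at h
  have := (uG_inj h).2.2
  have h2 : x * y = 0 := by linear_combination this - z * two_eq (F := F)
  exact mul_eq_zero.1 h2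

/-- an exponent two subgroup of `T0` lies in `E1` or `E2` -/
lemma sub_E (B : Set PSL(3, F)) (hB : ∀ t ∈ B, t ∈ T0 F) (hB2 : ∀ t ∈ B, t * t = 1)
    (hc : ∀ s ∈ B, ∀ t ∈ B, s * t = t * s) : (∀ t ∈ B, t ∈ E1 F) ∨ (∀ t ∈ B, t ∈ E2 F) := by
  by_contra! hcon
  obtain ⟨⟨s, hs, hs1⟩, ⟨t, ht, ht2⟩⟩ := hcon
  obtain ⟨x, y, z, rfl⟩ := hB s hs
  obtain ⟨x', y', z', rfl⟩ := hB t ht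
  rw [uG_mem_E1] at hs1
  rw [uG_mem_E2] at ht2
  have hy := (uG_sq _ _ _ (hB2 _ hs)).resolve_left hs1
  have hx := (uG_sq _ _ _ (hB2 _ ht)).resolve_right ht2
  have h := hc _ hs _ ht
  rw [uG_mul, uG_mul] at h
  have := (uG_inj h).2.2
  have h2 : x * y' = 0 := by rw [hx, hy] at this; linear_combination this
  exact (mul_ne_zero hs1 ht2) h2

lemma exists_w (hq : 4 ≤ Nat.card F) : ∃ w : F, w ≠ 0 ∧ w ≠ 1 := by
  by_contra! h
  have hs : (Set.univ : Set F) ⊆ {0, 1} := by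
    intro x _
    by_cases hx : x = 0
    · exact Or.inl hx
    · exact Or.inr (h x hx)
  have h1 := Set.ncard_le_ncard hs (Set.toFinite _)
  rw [Set.ncard_univ, Set.ncard_pair zero_ne_one] at h1
  omega

lemma card_le_of_image {α β : Type*} [Finite α] (B : Set β) (P : Set α) (f : α → β)
    (h : ∀ b ∈ B, ∃ a ∈ P, f a = b) : B.ncard ≤ P.ncard :=
  (Set.ncard_le_ncard (fun b hb => h b hb) ((Set.toFinite P).image f)).trans
    (Set.ncard_image_le (Set.toFinite P))

theorem key (hq : 4 ≤ Nat.card F) (A : Subgroup (MulAut PSL(3, F)))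
    (hp : ∀ φ ∈ A, φ * φ = 1)
    (hL : ∀ g, MulAut.conj g ∈ A → g ∈ T0 F)
    (hss : ∀ φ ∈ A, Stab φ ∨ Swap φ)
    (hA : Nat.card A = Nat.card F ^ 2) (φ : MulAut PSL(3, F)) (hφ : φ ∈ A) :
    ∃ t ∈ T0 F, φ = MulAut.conj t := by
  obtain ⟨w, hw0, hw1⟩ := exists_w (F := F) hq
  set q := Nat.card F with hqdef
  have hcomm : ∀ x ∈ A, ∀ y ∈ A, x * y = y * x := by
    intro x hx y hy
    have h1 := hp x hx
    have h2 := hp y hy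
    have h3 := hp _ (mul_mem hx hy)
    have e1 : x⁻¹ = x := inv_eq_of_mul_eq_one_right h1
    have e2 : y⁻¹ = y := inv_eq_of_mul_eq_one_right h2
    have e3 : (x * y)⁻¹ = x * y := inv_eq_of_mul_eq_one_right h3
    rw [← e3, _root_.mul_inv_rev, e1, e2]
  set B : Set PSL(3, F) := {t | MulAut.conj t ∈ A} with hB
  set A1 : Set (MulAut PSL(3, F)) := {φ | φ ∈ A ∧ ∃ t ∈ T0 F, φ = MulAut.conj t} with hA1
  set A0 : Set (MulAut PSL(3, F)) := {φ | φ ∈ A ∧ Stab φ} with hA0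
  have hcA : (A : Set (MulAut PSL(3, F))).ncard = q ^ 2 := by
    rw [← hA]; rfl
  have hfix : ∀ φ ∈ A, ∀ t ∈ B, φ t = t := fun φ hφ t ht => fix_of_commG φ t (hcomm _ hφ _ ht)
  have hB2 : ∀ t ∈ B, t * t = 1 := by
    intro t ht
    apply conj_injG
    rw [map_mul, map_one]; exact hp _ ht
  have hBE := sub_E B hL hB2 (fun s hs t ht => by
    apply conj_injG
    rw [map_mul, map_mul]; exact hcomm _ hs _ ht)
  have hA1B : A1.ncard ≤ B.ncard := by
    apply card_le_of_image A1 B MulAut.conj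
    rintro _ ⟨h, t, ht, rfl⟩
    exact ⟨t, h, rfl⟩
  have half1 : (A : Set (MulAut PSL(3, F))).ncard ≤ 2 * A0.ncard := by
    apply half
    intro x hx y hy hx0 hy0
    have sx : Swap x := (hss x hx).resolve_left (fun h => hx0 ⟨hx, h⟩)
    have sy : Swap y := (hss y hy).resolve_left (fun h => hy0 ⟨hy, h⟩)
    exact ⟨mul_mem hx hy, sx.mul sy⟩
  -- semilinear data of elements of `A0` outside `A1`
  have data : ∀ φ ∈ A0, φ ∉ A1 → ∃ σ a b c d e, Semi φ σ a b c d e ∧ a ≠ 0 ∧ b ≠ 0 ∧ e ≠ 0 ∧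
      σ.comp σ = RingHom.id F ∧ σ ≠ RingHom.id F := by
    intro φ hφ hφ1
    obtain ⟨σ, a, b, c, d, e, hs, ha, hb, he⟩ := semi_main φ hφ.2
    refine ⟨σ, a, b, c, d, e, hs, ha, hb, he, semi_inv hs (hp _ hφ.1), ?_⟩
    rintro rfl
    exact hφ1 ⟨hφ.1, fact2 φ 1 (by rw [pow_one, pow_two]; exact hp _ hφ.1) a b c d e hs w hw0 hw1⟩
  have half2 : A0.ncard ≤ 2 * A1.ncard := by
    apply half
    intro x hx y hy hx1 hy1
    obtain ⟨σ, a, b, c, d, e, hs, ha, hb, he, hσ, hσ1⟩ := data x hx hx1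
    obtain ⟨τ, a', b', c', d', e', hs', ha', hb', he', hτ, hτ1⟩ := data y hy hy1
    obtain ⟨ρ, a'', b'', c'', d'', e'', hs'', ha'', hb'', he''⟩ := semi_main (x * y) (hx.2.mul hy.2)
    have := semi_comp hs hs' hs'' he''
    rw [inv_unique σ τ hσ hτ hσ1 hτ1] at this
    subst this
    have hm : x * y ∈ A := mul_mem hx.1 hy.1
    exact ⟨hm, fact2 _ 1 (by rw [pow_one, pow_two]; exact hp _ hm) _ _ _ _ _ hs'' w hw0 hw1⟩
  have lam : ∀ σ : F →+* F, σ ≠ RingHom.id F → ∃ l, σ l ≠ l := by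
    intro σ h
    by_contra! hc
    exact h (RingHom.ext hc)
  by_contra hcon
  have hφ1 : φ ∉ A1 := fun h => hcon h.2
  by_cases hsw : ∃ g ∈ A, ¬ Stab g
  · obtain ⟨γ, hγ, hγs⟩ := hsw
    have hγs : Swap γ := (hss γ hγ).resolve_left hγs
    have hBZ : ∀ t ∈ B, ∃ z : F, t = uG 0 0 z := by
      intro t ht
      have hft := hfix γ hγ t ht
      have h12 : t ∈ E1 F ∧ t ∈ E2 F := by
        rcases hBE with h | h
        · have h1 := h t ht
          have h2 := (hγs.2 t).2 h1
          rw [hft] at h2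
          exact ⟨h1, h2⟩
        · have h1 := h t ht
          have h2 := (hγs.1 t).2 h1
          rw [hft] at h2
          exact ⟨h2, h1⟩
      obtain ⟨⟨y, z, rfl⟩, h2⟩ := h12
      rw [uG_mem_E2] at h2
      exact ⟨z, by rw [h2]⟩
    by_cases h01 : ∃ ψ ∈ A0, ψ ∉ A1
    · obtain ⟨ψ, hψ0, hψ1⟩ := h01
      obtain ⟨σ, a, b, c, d, e, hs, ha, hb, he, hσ, hσ1⟩ := data ψ hψ0 hψ1
      obtain ⟨l, hl⟩ := lam σ hσ1
      have hfc := fixcard (F := F) (M := F) (fun z => σ z * e) σ (by intro v w; simp [add_mul])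
        (by intro c v; simp [mul_assoc]) l hl
      have hle : B.ncard ≤ ({z : F | σ z * e = z} : Set F).ncard := by
        apply card_le_of_image _ _ (fun z => uG 0 0 z)
        intro t ht
        obtain ⟨z, rfl⟩ := hBZ t ht
        refine ⟨z, ?_, rfl⟩
        have h1 := hfix ψ hψ0.1 _ ht
        rw [hs] at h1
        have := (uG_inj h1).2.2
        simpa using this
      have h5 : q ^ 2 ≤ 4 * ({z : F | σ z * e = z} : Set F).ncard := by omega
      have hfc : ({z : F | σ z * e = z} : Set F).ncard ^ 2 ≤ q := hfc
      generalize ({z : F | σ z * e = z} : Set F).ncard = m at *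
      have hm : m < q := by nlinarith
      nlinarith
    · push Not at h01
      have hle : A0.ncard ≤ A1.ncard := Set.ncard_le_ncard (fun x hx => h01 x hx) (Set.toFinite _)
      have hBq : B.ncard ≤ q := by
        rw [hqdef, ← Set.ncard_univ]
        apply card_le_of_image _ _ (fun z => uG 0 0 z)
        intro t ht
        obtain ⟨z, rfl⟩ := hBZ t ht
        exact ⟨z, trivial, rfl⟩
      have : q ^ 2 ≤ 2 * q := by omega
      nlinarith
  · push Not at hsw
    have hA0 : (A : Set (MulAut PSL(3, F))).ncard ≤ A0.ncard :=
      Set.ncard_le_ncard (fun x hx => ⟨hx, hsw x hx⟩) (Set.toFinite _)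
    obtain ⟨σ, a, b, c, d, e, hs, ha, hb, he, hσ, hσ1⟩ := data φ ⟨hφ, hsw φ hφ⟩ hφ1
    obtain ⟨l, hl⟩ := lam σ hσ1
    have hBq : B.ncard ^ 2 ≤ q ^ 2 := by
      rcases hBE with h | h
      · have hfc := fixcard (F := F) (M := F × F) (fun v => (σ v.1 * b, σ v.1 * d + σ v.2 * e)) σ
          (by intro v w; ext <;> simp <;> ring)
          (by intro c v; ext <;> simp <;> ring) l hl
        rw [Nat.card_prod, ← hqdef, ← pow_two] at hfc
        refine le_trans (Nat.pow_le_pow_left ?_ 2) hfc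
        apply card_le_of_image _ _ (fun v : F × F => uG 0 v.1 v.2)
        intro t ht
        obtain ⟨y, z, rfl⟩ := h t ht
        refine ⟨(y, z), ?_, rfl⟩
        have h1 := hfix φ hφ _ ht
        rw [hs] at h1
        obtain ⟨-, h2, h3⟩ := uG_inj h1
        simp at h3
        exact Prod.ext h2 h3
      · have hfc := fixcard (F := F) (M := F × F) (fun v => (σ v.1 * a, σ v.1 * c + σ v.2 * e)) σ
          (by intro v w; ext <;> simp <;> ring)
          (by intro c v; ext <;> simp <;> ring) l hl
        rw [Nat.card_prod, ← hqdef, ← pow_two] at hfc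
        refine le_trans (Nat.pow_le_pow_left ?_ 2) hfc
        apply card_le_of_image _ _ (fun v : F × F => uG v.1 0 v.2)
        intro t ht
        obtain ⟨y, z, rfl⟩ := h t ht
        refine ⟨(y, z), ?_, rfl⟩
        have h1 := hfix φ hφ _ ht
        rw [hs] at h1
        obtain ⟨h2, -, h3⟩ := uG_inj h1
        simp at h3
        exact Prod.ext h2 h3
    have hBq' : B.ncard ≤ q := (Nat.pow_le_pow_iff_left two_ne_zero).1 hBq
    have : q ^ 2 ≤ 2 * q := by omega
    nlinarith

end key
end PSLAux

namespace PSLAux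
open Matrix Matrix.SpecialLinearGroup
open scoped MatrixGroups

section fin
variable {F : Type*} [Field F] [CharP F 2] [Finite F]

lemma card_E1 : Nat.card (E1 F) = Nat.card F ^ 2 := by
  rw [pow_two, ← Nat.card_prod]
  refine (Nat.card_congr (Equiv.ofBijective (fun v : F × F => (⟨uG 0 v.1 v.2, _, _, rfl⟩ : E1 F)) ⟨?_, ?_⟩)).symm
  · intro v w h
    have := uG_inj (congrArg Subtype.val h)
    exact Prod.ext this.2.1 this.2.2
  · rintro ⟨_, y, z, rfl⟩; exact ⟨(y, z), rfl⟩

lemma card_E2 : Nat.card (E2 F) = Nat.card F ^ 2 := by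
  rw [pow_two, ← Nat.card_prod]
  refine (Nat.card_congr (Equiv.ofBijective (fun v : F × F => (⟨uG v.1 0 v.2, _, _, rfl⟩ : E2 F)) ⟨?_, ?_⟩)).symm
  · intro v w h
    have := uG_inj (congrArg Subtype.val h)
    exact Prod.ext this.1 this.2.2
  · rintro ⟨_, y, z, rfl⟩; exact ⟨(y, z), rfl⟩

lemma card_T0 : Nat.card (T0 F) = Nat.card F ^ 3 := by
  have : Nat.card F ^ 3 = Nat.card (F × F × F) := by
    rw [Nat.card_prod, Nat.card_prod]; ring
  rw [this]
  refine (Nat.card_congr (Equiv.ofBijective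
    (fun v : F × F × F => (⟨uG v.1 v.2.1 v.2.2, _, _, _, rfl⟩ : T0 F)) ⟨?_, ?_⟩)).symm
  · intro v w h
    have := uG_inj (congrArg Subtype.val h)
    exact Prod.ext this.1 (Prod.ext this.2.1 this.2.2)
  · rintro ⟨_, x, y, z, rfl⟩; exact ⟨(x, y, z), rfl⟩

lemma E1_le : E1 F ≤ T0 F := by rintro _ ⟨y, z, rfl⟩; exact ⟨_, _, _, rfl⟩
lemma E2_le : E2 F ≤ T0 F := by rintro _ ⟨y, z, rfl⟩; exact ⟨_, _, _, rfl⟩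

lemma card_pow : ∃ n : ℕ, n ≠ 0 ∧ Nat.card F = 2 ^ n := by
  have : Fintype F := Fintype.ofFinite F
  obtain ⟨n, -, h⟩ := FiniteField.card F 2
  exact ⟨n, n.ne_zero, by rw [Nat.card_eq_fintype_card]; exact h⟩

lemma card_dvd : Nat.card PSL(3, F) ∣
    Nat.card F ^ 3 * ((Nat.card F ^ 3 - 1) * (Nat.card F ^ 2 - 1) * (Nat.card F - 1)) := by
  have : Fintype F := Fintype.ofFinite F
  have h1 : Nat.card PSL(3, F) ∣ Nat.card SL(3, F) := Subgroup.card_quotient_dvd_card _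
  have h2 : Nat.card SL(3, F) ∣ Nat.card (GL (Fin 3) F) :=
    Subgroup.card_dvd_of_injective (SpecialLinearGroup.toGL) SpecialLinearGroup.toGL_injective
  have h3 : Nat.card (GL (Fin 3) F) =
    Nat.card F ^ 3 * ((Nat.card F ^ 3 - 1) * (Nat.card F ^ 2 - 1) * (Nat.card F - 1)) := by
    rw [Matrix.card_GL_field, Nat.card_eq_fintype_card, Fin.prod_univ_three]
    have hq : 1 ≤ Fintype.card F := Fintype.card_pos
    generalize Fintype.card F = q at *
    obtain ⟨m, rfl⟩ := Nat.exists_eq_add_of_le' hq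
    have e1 : (m + 1) ^ 3 - (m + 1) ^ 1 = (m + 1) * ((m + 1) ^ 2 - 1) := by
      rw [Nat.mul_sub]; ring_nf
    have e2 : (m + 1) ^ 3 - (m + 1) ^ 2 = (m + 1) ^ 2 * ((m + 1) - 1) := by
      rw [Nat.mul_sub]; ring_nf
    simp only [Fin.val_zero, Fin.val_one, Fin.val_two, e1, e2, pow_zero]
    ring
  rw [← h3]
  exact h1.trans h2

lemma sylow_T0 (K : Subgroup PSL(3, F)) (hK : IsPGroup 2 K) (hT : T0 F ≤ K) : K = T0 F := by
  symm
  apply Subgroup.eq_of_le_of_card_ge hT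
  rw [card_T0]
  obtain ⟨m, hm⟩ := IsPGroup.iff_card.1 hK
  have h1 : Nat.card K ∣ _ := (Subgroup.card_subgroup_dvd_card K).trans card_dvd
  obtain ⟨n, hn, hq⟩ := card_pow (F := F)
  have hodd : Nat.Coprime (Nat.card K)
      ((Nat.card F ^ 3 - 1) * (Nat.card F ^ 2 - 1) * (Nat.card F - 1)) := by
    rw [hm]
    apply Nat.Coprime.pow_left
    rw [Nat.coprime_two_left]
    have hev : Even (Nat.card F) := by rw [hq]; exact (Nat.even_pow.2 ⟨even_two, hn⟩)
    have hpos : 0 < Nat.card F := Nat.card_pos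
    refine ((Nat.Even.sub_odd ?_ (hev.pow_of_ne_zero three_ne_zero) odd_one).mul
      (Nat.Even.sub_odd ?_ (hev.pow_of_ne_zero two_ne_zero) odd_one)).mul
      (Nat.Even.sub_odd ?_ hev odd_one)
    · exact Nat.one_le_pow _ _ hpos
    · exact Nat.one_le_pow _ _ hpos
    · exact hpos
  exact Nat.le_of_dvd (pow_pos Nat.card_pos 3) (hodd.dvd_of_dvd_mul_right h1)

lemma E1_ne_E2 : E1 F ≠ E2 F := by
  intro h
  have : uG (0 : F) 1 0 ∈ E1 F := ⟨_, _, rfl⟩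
  rw [h, uG_mem_E2] at this
  exact one_ne_zero this

lemma E1_sq : ∀ t ∈ E1 F, t * t = 1 := by
  rintro _ ⟨y, z, rfl⟩
  rw [uG_mul, ← uG_zero, CharTwo.add_self_eq_zero, CharTwo.add_self_eq_zero, CharTwo.add_self_eq_zero]
  simp

lemma E2_sq : ∀ t ∈ E2 F, t * t = 1 := by
  rintro _ ⟨y, z, rfl⟩
  rw [uG_mul, ← uG_zero, CharTwo.add_self_eq_zero, CharTwo.add_self_eq_zero, CharTwo.add_self_eq_zero]
  simp

lemma sq_comm {G : Type*} [Group G] (H : Subgroup G) (hp : ∀ x ∈ H, x * x = 1) :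
    ∀ x ∈ H, ∀ y ∈ H, x * y = y * x := by
  intro x hx y hy
  have e1 : x⁻¹ = x := inv_eq_of_mul_eq_one_right (hp x hx)
  have e2 : y⁻¹ = y := inv_eq_of_mul_eq_one_right (hp y hy)
  have e3 : (x * y)⁻¹ = x * y := inv_eq_of_mul_eq_one_right (hp _ (mul_mem hx hy))
  rw [← e3, _root_.mul_inv_rev, e1, e2]

lemma map_E (φ : MulAut PSL(3, F)) (hφ : ∀ t ∈ T0 F, φ t ∈ T0 F) (E : Subgroup PSL(3, F))
    (hE : E ≤ T0 F) (hsq : ∀ t ∈ E, t * t = 1) (hc : Nat.card E = Nat.card F ^ 2) :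
    E.map φ.toMonoidHom = E1 F ∨ E.map φ.toMonoidHom = E2 F := by
  have hsq' : ∀ t ∈ E.map φ.toMonoidHom, t * t = 1 := by
    rintro _ ⟨t, ht, rfl⟩
    rw [← map_mul, hsq t ht, map_one]
  have hcard : Nat.card (E.map φ.toMonoidHom) = Nat.card F ^ 2 := by
    rw [← hc]
    exact (Nat.card_congr (E.equivMapOfInjective _ φ.injective).toEquiv).symm
  rcases sub_E (E.map φ.toMonoidHom : Set PSL(3, F))
    (by rintro _ ⟨t, ht, rfl⟩; exact hφ t (hE ht)) hsq'
    (sq_comm _ hsq') with h | h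
  · left; exact Subgroup.eq_of_le_of_card_ge h (by rw [hcard, card_E1])
  · right; exact Subgroup.eq_of_le_of_card_ge h (by rw [hcard, card_E2])

lemma mem_iff_of_map {φ : MulAut PSL(3, F)} {E E' : Subgroup PSL(3, F)}
    (h : E.map φ.toMonoidHom = E') (g : PSL(3, F)) : φ g ∈ E' ↔ g ∈ E := by
  rw [← h]
  exact Subgroup.mem_map_iff_mem (f := φ.toMonoidHom) φ.injective

lemma stab_or_swap (φ : MulAut PSL(3, F)) (hφ : ∀ t ∈ T0 F, φ t ∈ T0 F) : Stab φ ∨ Swap φ := by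
  have hinj := Subgroup.map_injective (f := φ.toMonoidHom) φ.injective
  rcases map_E φ hφ _ E1_le E1_sq card_E1 with h1 | h1 <;>
  rcases map_E φ hφ _ E2_le E2_sq card_E2 with h2 | h2
  · exact absurd (hinj (h1.trans h2.symm)) E1_ne_E2
  · exact Or.inl ⟨mem_iff_of_map h1, mem_iff_of_map h2⟩
  · exact Or.inr ⟨mem_iff_of_map h2, mem_iff_of_map h1⟩
  · exact absurd (hinj (h1.trans h2.symm)) E1_ne_E2

lemma main1 (hq : 4 ≤ Nat.card F) (S : Subgroup (MulAut PSL(3, F))) (hS : IsPGroup 2 S)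
    (hT : (T0 F).map MulAut.conj ≤ S) (U : Subgroup (MulAut PSL(3, F))) (hU : U ≤ S)
    (f : U ≃* ↥(S ⊓ (MulAut.conj : PSL(3, F) →* MulAut PSL(3, F)).range)) :
    U = S ⊓ (MulAut.conj : PSL(3, F) →* MulAut PSL(3, F)).range := by
  have hK : S.comap MulAut.conj = T0 F := by
    apply sylow_T0
    · exact hS.comap_of_injective _ conj_injG
    · exact Subgroup.map_le_iff_le_comap.1 hT
  have hSL : S ⊓ (MulAut.conj : PSL(3, F) →* MulAut PSL(3, F)).range = (T0 F).map MulAut.conj := by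
    rw [← hK, Subgroup.map_comap_eq, inf_comm]
  have hL : ∀ g, MulAut.conj g ∈ S → g ∈ T0 F := fun g hg => by rw [← hK]; exact hg
  have hss : ∀ φ ∈ S, Stab φ ∨ Swap φ := by
    intro φ hφ
    apply stab_or_swap
    intro t ht
    apply hL
    rw [← aut_conj]
    exact mul_mem (mul_mem hφ (hT ⟨t, ht, rfl⟩)) (inv_mem hφ)
  rw [hSL] at f ⊢
  let j : T0 F ≃* ↥((T0 F).map (MulAut.conj : PSL(3, F) →* MulAut PSL(3, F))) :=
    (T0 F).equivMapOfInjective _ conj_injG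
  let θ : T0 F →* MulAut PSL(3, F) := U.subtype.comp (j.trans f.symm).toMonoidHom
  have hθinj : Function.Injective θ := U.subtype_injective.comp (j.trans f.symm).injective
  have hθU : ∀ t, θ t ∈ U := fun t => ((j.trans f.symm) t).2
  have hE : ∀ (E : Subgroup PSL(3, F)) (hE : E ≤ T0 F) (_ : ∀ t ∈ E, t * t = 1)
      (_ : Nat.card E = Nat.card F ^ 2), ∀ t, ∀ ht : t ∈ E,
      θ ⟨t, hE ht⟩ ∈ (T0 F).map (MulAut.conj : PSL(3, F) →* MulAut PSL(3, F)) := by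
    intro E hE hsq hc t ht
    let η : E →* MulAut PSL(3, F) := θ.comp (Subgroup.inclusion hE)
    have hη : Function.Injective η := hθinj.comp (Subgroup.inclusion_injective hE)
    have hηS : ∀ x ∈ η.range, x ∈ S := by
      rintro _ ⟨t, rfl⟩; exact hU (hθU _)
    obtain ⟨s, hs, h⟩ := key hq η.range
      (by
        rintro _ ⟨t, rfl⟩
        have : t * t = 1 := Subtype.ext (hsq t t.2)
        rw [← map_mul, this, map_one])
      (fun g hg => hL g (hηS _ hg)) (fun φ hφ => hss φ (hηS _ hφ))
      (by rw [← hc]; exact (Nat.card_congr (MonoidHom.ofInjective hη).toEquiv).symm)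
      (η ⟨t, ht⟩) ⟨_, rfl⟩
    exact ⟨s, hs, h.symm⟩
  apply Subgroup.eq_of_le_of_card_ge
  · intro u hu
    obtain ⟨⟨_, x, y, z, rfl⟩, ht⟩ := (j.trans f.symm).surjective ⟨u, hu⟩
    have hu' : u = θ ⟨uG x y z, x, y, z, rfl⟩ := (congrArg Subtype.val ht).symm
    have h1 := hE (E1 F) E1_le E1_sq card_E1 (uG 0 y z) ⟨_, _, rfl⟩
    have h2 := hE (E2 F) E2_le E2_sq card_E2 (uG x 0 0) ⟨_, _, rfl⟩
    have := mul_mem h1 h2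
    rw [← map_mul] at this
    rw [hu']
    convert this using 2
    apply Subtype.ext
    change uG x y z = uG 0 y z * uG x 0 0
    rw [uG_mul]; simp
  · exact (Nat.card_congr f.toEquiv).ge

theorem main_F (hq : 4 ≤ Nat.card F) (S : Sylow 2 (MulAut PSL(3, F)))
    (U : Subgroup (MulAut PSL(3, F))) (hU : U ≤ (S : Subgroup (MulAut PSL(3, F))))
    (f : U ≃* ↥((S : Subgroup (MulAut PSL(3, F))) ⊓ (MulAut.conj : PSL(3, F) →* MulAut PSL(3, F)).range)) :
    U = (S : Subgroup (MulAut PSL(3, F))) ⊓ (MulAut.conj : PSL(3, F) →* MulAut PSL(3, F)).range := by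
  have hT2 : IsPGroup 2 ((T0 F).map (MulAut.conj : PSL(3, F) →* MulAut PSL(3, F))) := by
    apply IsPGroup.map
    obtain ⟨n, -, hn⟩ := card_pow (F := F)
    apply IsPGroup.of_card (n := n * 3)
    rw [card_T0, hn, pow_mul]
  obtain ⟨S1, hS1⟩ := hT2.exists_le_sylow
  obtain ⟨g, hg⟩ := MulAction.exists_smul_eq (MulAut PSL(3, F)) S S1
  set c := (MulAut.conj g).toMonoidHom with hc
  have hcinj : Function.Injective c := (MulAut.conj g).injective
  have hmap : (S : Subgroup (MulAut PSL(3, F))).map c = S1 := by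
    rw [← hg]; rfl
  have hL : ((MulAut.conj : PSL(3, F) →* MulAut PSL(3, F)).range).map c =
      (MulAut.conj : PSL(3, F) →* MulAut PSL(3, F)).range := by
    apply Subgroup.eq_of_le_of_card_ge
    · rintro _ ⟨_, ⟨t, rfl⟩, rfl⟩
      exact ⟨g t, (aut_conj g t).symm⟩
    · exact (Nat.card_congr (Subgroup.equivMapOfInjective _ _ hcinj).toEquiv).le
  have hinf : ((S : Subgroup (MulAut PSL(3, F))) ⊓
      (MulAut.conj : PSL(3, F) →* MulAut PSL(3, F)).range).map c =
      (S1 : Subgroup (MulAut PSL(3, F))) ⊓ (MulAut.conj : PSL(3, F) →* MulAut PSL(3, F)).range := by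
    rw [Subgroup.map_inf _ _ _ hcinj, hmap, hL]
  apply Subgroup.map_injective hcinj
  rw [hinf]
  apply main1 hq _ S1.isPGroup' hS1
  · rw [← hmap]; exact Subgroup.map_mono hU
  · exact ((Subgroup.equivMapOfInjective U c hcinj).symm.trans f).trans
      ((Subgroup.equivMapOfInjective _ c hcinj).trans (MulEquiv.subgroupCongr hinf))

end fin
end PSLAux

theorem sylow_unique_in_aut_PSL3 (a : ℕ) (ha : 2 ≤ a)
    (S : Sylow 2 (MulAut (PSL3 a)))
    (U : Subgroup (MulAut (PSL3 a))) (hU : U ≤ (S : Subgroup (MulAut (PSL3 a))))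
    (hiso : Nonempty
      (↥U ≃* ↥((S : Subgroup (MulAut (PSL3 a))) ⊓ genFitting (MulAut (PSL3 a))))) :
    U = (S : Subgroup (MulAut (PSL3 a))) ⊓ genFitting (MulAut (PSL3 a)) := by
  haveI : IsSimpleGroup (PSL3 a) := PSLAux.PSL3_simple
  have hg : genFitting (MulAut (PSL3 a)) = (MulAut.conj : PSL3 a →* MulAut (PSL3 a)).range :=
    PSLAux.genFitting_aut PSLAux.PSL3_perfect
  rw [hg] at hiso ⊢
  obtain ⟨f⟩ := hiso
  have hcard : Nat.card (GaloisField 2 a) = 2 ^ a := GaloisField.card 2 a (by omega)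
  have hq : 4 ≤ Nat.card (GaloisField 2 a) := by
    rw [hcard]
    calc 4 = 2 ^ 2 := by norm_num
      _ ≤ 2 ^ a := Nat.pow_le_pow_right (by norm_num) ha
  exact PSLAux.main_F hq S U hU f
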